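/- arXiv:2306.06247 — 11 statements merged into one kernel-verified Lean document; each statement's English description precedes it below -/
import Mathlib

section
/- Let 𝒳 be a nonempty set, 𝒴 = ℕ, and 𝒮(𝒴) = {ℕ \ {y} : y ∈ ℕ} the collection of complements of singletons. Let ℋ = {h_y : y ∈ ℕ} be the class of constant functions h_y(x) = y. Then for every deterministic online learner 𝒜 and every T ∈ ℕ, there exists a stream (x_1,S_1),…,(x_T,S_T) ∈ (𝒳 × 𝒮(𝒴))^T that is realizable by ℋ and on which 𝒜 errs at every round, i.e., ŷ_t ∉ S_t for all t ∈ [T]. -/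
/-!
The adversary always presents the same instance `x₀` and reveals the complement of the label the
learner is about to predict, so every prediction is wrong. Only finitely many labels are excluded
in `T` rounds, so some natural number survives, and the corresponding constant function realizes
the stream.
-/

/-- The history (list of labeled examples) presented to an online learner before round `t`,
on the stream given by instances `x` and feedback sets `S`. -/
def hist {X Y : Type*} (x : ℕ → X) (S : ℕ → Set Y) (t : ℕ) : List (X × Set Y) :=
  (List.range t).map fun i => (x i, S i)

/-- The history after `t` rounds against the adversary that presents `x₀` and reveals the
complement of the learner's prediction. -/
def advHist {X : Type*} (A : List (X × Set ℕ) → X → ℕ) (x₀ : X) : ℕ → List (X × Set ℕ)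
  | 0 => []
  | t + 1 => advHist A x₀ t ++ [(x₀, {A (advHist A x₀ t) x₀}ᶜ)]

theorem hist_eq_advHist {X : Type*} (A : List (X × Set ℕ) → X → ℕ) (x₀ : X) (t : ℕ) :
    hist (fun _ => x₀) (fun i => ({A (advHist A x₀ i) x₀}ᶜ : Set ℕ)) t = advHist A x₀ t := by
  induction t with
  | zero => rfl
  | succ t ih =>
    unfold hist at ih ⊢
    rw [List.range_succ, List.map_append, ih]
    rfl

/-- With `𝒴 = ℕ`, `𝒮(𝒴)` the complements of singletons, and `ℋ` the class of
constant functions, every deterministic online learner errs on every round of some realizable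
stream of any length `T`. -/
theorem stmt0 {X : Type*} [Nonempty X]
    (A : List (X × Set ℕ) → X → ℕ) (T : ℕ) :
    ∃ (x : ℕ → X) (S : ℕ → Set ℕ),
      (∀ t < T, ∃ y : ℕ, S t = ({y}ᶜ : Set ℕ)) ∧
      (∃ y : ℕ, ∀ t < T, y ∈ S t) ∧
      (∀ t < T, A (hist x S t) (x t) ∉ S t) := by
  obtain ⟨x₀⟩ := ‹Nonempty X›
  refine ⟨fun _ => x₀, fun i => {A (advHist A x₀ i) x₀}ᶜ, fun t _ => ⟨_, rfl⟩, ?_, ?_⟩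
  · obtain ⟨y, hy⟩ := Infinite.exists_notMem_finset
      ((Finset.range T).image fun i => A (advHist A x₀ i) x₀)
    refine ⟨y, fun t ht h => hy ?_⟩
    exact Finset.mem_image.2 ⟨t, Finset.mem_range.2 ht, (Set.mem_singleton_iff.1 h).symm⟩
  · intro t _
    rw [hist_eq_advHist]
    simp
end

section
/- Let 𝒳 be a nonempty set, 𝒴 = ℕ with the discrete σ-algebra, and 𝒮(𝒴) = {ℕ \ {y} : y ∈ ℕ}. For every T ∈ ℕ there exists a randomized online learner 𝒜 (namely, the learner whose output measure at every round is the uniform distribution on {1,…,T}) such that for every stream (x_1,S_1),…,(x_T,S_T) ∈ (𝒳 × 𝒮(𝒴))^T, the expected cumulative loss satisfies Σ_{t=1}^T μ̂_t(𝒴 \ S_t) ≤ 1. -/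
/-!
Against complements of singletons, the loss in a round is the mass the learner puts on a single
point. The learner that always outputs the uniform distribution on `{1, …, T}` puts mass at most
`1 / T` on any point, so its loss over `T` rounds is at most `T * (1 / T) = 1`. For `T = 0` the
sum is empty and any learner will do.
-/

open MeasureTheory

/-- With `𝒴 = ℕ` (discrete σ-algebra) and `𝒮(𝒴)` the complements of singletons,
for every horizon `T` there is a randomized online learner whose expected cumulative loss
`Σ_t μ̂_t(𝒴 \ S_t)` is at most 1 on every stream of length `T` labeled by sets from `𝒮(𝒴)`. -/
theorem stmt1 {X : Type*} [Nonempty X] (T : ℕ) :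
    ∃ A : List (X × Set ℕ) → X → ProbabilityMeasure ℕ,
      ∀ (x : ℕ → X) (S : ℕ → Set ℕ),
        (∀ t < T, ∃ y : ℕ, S t = ({y}ᶜ : Set ℕ)) →
        ∑ t ∈ Finset.range T, (A (hist x S t) (x t)).toMeasure ((S t)ᶜ) ≤ 1 := by
  rcases Nat.eq_zero_or_pos T with rfl | hT
  · exact ⟨fun _ _ => ⟨Measure.dirac 0, inferInstance⟩, by simp⟩
  have hne : (Finset.Icc 1 T).Nonempty := ⟨1, by simp; omega⟩
  refine ⟨fun _ _ => ⟨(PMF.uniformOfFinset (Finset.Icc 1 T) hne).toMeasure, inferInstance⟩, ?_⟩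
  intro x S hS
  have hbound : ∀ t ∈ Finset.range T,
      (PMF.uniformOfFinset (Finset.Icc 1 T) hne).toMeasure ((S t)ᶜ) ≤ (T : ENNReal)⁻¹ := by
    intro t ht
    obtain ⟨y, hy⟩ := hS t (Finset.mem_range.mp ht)
    rw [hy, compl_compl, PMF.toMeasure_apply_singleton _ _ (measurableSet_singleton y),
      PMF.uniformOfFinset_apply]
    split_ifs <;> simp
  refine (Finset.sum_le_sum hbound).trans ?_
  rw [Finset.sum_const, Finset.card_range, nsmul_eq_mul]
  exact ENNReal.mul_inv_le_one _
end

section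
/- Let (𝒴, σ(𝒴)) be a measurable space, 𝒮(𝒴) ⊆ σ(𝒴), 𝒳 a set, and ℋ ⊆ 𝒴^𝒳 nonempty. Suppose d ∈ ℕ is such that ℋ does not shatter any Set Littlestone tree of depth d+1. Then there exists a deterministic online learner 𝒜 such that for every T ∈ ℕ and every stream (x_1,S_1),…,(x_T,S_T) ∈ (𝒳 × 𝒮(𝒴))^T that is realizable by ℋ, the number of mistakes satisfies Σ_{t=1}^T 1{ŷ_t ∉ S_t} ≤ d. -/
/-!
The learner is the Standard Optimal Algorithm. Shattering is first rephrased recursively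
(`RecShatter`): a class `V` shatters depth `n + 1` if some instance `x` is such that every
prediction `y` can be refuted by a set `S ∈ 𝒮` for which the restriction of `V` to
`h x ∈ S` still shatters depth `n`. Gluing subtrees shows that recursive shattering produces an
actual Set Littlestone tree (`RecShatter.slShatter`).

Let `slRank V` be the least depth that `V` does not shatter. On a nonempty version space `V` it is
positive, and negating the recursive definition yields, for every instance, a prediction such
that any feedback set refuting it strictly decreases the rank (`exists_prediction`). The learner
predicts this label on the current version space. The rank starts at most `d + 1`, never increases,
drops with each mistake, and stays at least `1` on a realizable stream; hence at most `d` mistakes.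
-/

open MeasureTheory

/-- Restriction of a path of length `d` to its strict prefix before position `t`. -/
def pref {M : Type*} {d : ℕ} (y : Fin d → M) (t : Fin d) : Fin (t : ℕ) → M :=
  fun i => y ⟨(i : ℕ), i.isLt.trans t.isLt⟩

/-- Restriction of a path of length `d` to its prefix up to and including position `t`. -/
def prefS {M : Type*} {d : ℕ} (y : Fin d → M) (t : Fin d) : Fin ((t : ℕ) + 1) → M :=
  fun i => y ⟨(i : ℕ), lt_of_le_of_lt (Nat.lt_succ_iff.mp i.isLt) t.isLt⟩

/-- `ℋ` shatters a Set Littlestone tree of depth `d` (with feedback sets from `𝒮`):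
there are node labels `node t : 𝒴^t → 𝒳` and edge labels `edge t : 𝒴^{t+1} → 𝒮` such that
for every path `y ∈ 𝒴^d`, (a) `y t ∉ edge t (y_{≤ t})` for all `t`, and (b) some `h ∈ ℋ`
satisfies `h (node t (y_{< t})) ∈ edge t (y_{≤ t})` for all `t`. -/
def SLShatter {X Y : Type*} (𝒮 : Set (Set Y)) (H : Set (X → Y)) (d : ℕ) : Prop :=
  ∃ (node : ∀ t : Fin d, (Fin (t : ℕ) → Y) → X)
    (edge : ∀ t : Fin d, (Fin ((t : ℕ) + 1) → Y) → Set Y),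
    (∀ (t : Fin d) (ys : Fin ((t : ℕ) + 1) → Y), edge t ys ∈ 𝒮) ∧
    ∀ y : Fin d → Y,
      (∀ t : Fin d, y t ∉ edge t (prefS y t)) ∧
      ∃ h ∈ H, ∀ t : Fin d, h (node t (pref y t)) ∈ edge t (prefS y t)

/-- `ℋ` `γ`-shatters a measure tree of depth `d`: nodes are labeled along paths of
probability measures, and for every path `μ ∈ Π(𝒴)^d`, (a) `μ t (edge t (μ_{≤t})) ≤ 1 - γ`
(strict inequality `< 1` when `γ = 0`), and (b) some `h ∈ ℋ` is consistent with the edges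
along the path. -/
def MSShatter {X Y : Type*} [MeasurableSpace Y] (𝒮 : Set (Set Y)) (H : Set (X → Y))
    (γ : ℝ) (d : ℕ) : Prop :=
  ∃ (node : ∀ t : Fin d, (Fin (t : ℕ) → ProbabilityMeasure Y) → X)
    (edge : ∀ t : Fin d, (Fin ((t : ℕ) + 1) → ProbabilityMeasure Y) → Set Y),
    (∀ (t : Fin d) (ms : Fin ((t : ℕ) + 1) → ProbabilityMeasure Y), edge t ms ∈ 𝒮) ∧
    ∀ μ : Fin d → ProbabilityMeasure Y,
      (∀ t : Fin d,
        if γ = 0 then (μ t).toMeasure (edge t (prefS μ t)) < 1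
        else (μ t).toMeasure (edge t (prefS μ t)) ≤ 1 - ENNReal.ofReal γ) ∧
      ∃ h ∈ H, ∀ t : Fin d, h (node t (pref μ t)) ∈ edge t (prefS μ t)

/-- `ℋ` shatters a `p`-Set Littlestone tree of depth `d`: paths are sequences in `[p]`,
and for every path `q ∈ [p]^d`, (a) the `p` sets labeling the outgoing edges of each node
along the path have empty intersection, and (b) some `h ∈ ℋ` is consistent with the edges
along the path. -/
def PSLShatter {X Y : Type*} (𝒮 : Set (Set Y)) (H : Set (X → Y)) (p d : ℕ) : Prop :=
  ∃ (node : ∀ t : Fin d, (Fin (t : ℕ) → Fin p) → X)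
    (edge : ∀ t : Fin d, (Fin ((t : ℕ) + 1) → Fin p) → Set Y),
    (∀ (t : Fin d) (qs : Fin ((t : ℕ) + 1) → Fin p), edge t qs ∈ 𝒮) ∧
    ∀ q : Fin d → Fin p,
      (∀ t : Fin d, ⋂ i : Fin p, edge t (Fin.snoc (pref q t) i) = ∅) ∧
      ∃ h ∈ H, ∀ t : Fin d, h (node t (pref q t)) ∈ edge t (prefS q t)

/-- The hypotheses of `V` whose value at `x` lies in `S`. -/
def restrictClass {X Y : Type*} (V : Set (X → Y)) (x : X) (S : Set Y) : Set (X → Y) :=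
  {h ∈ V | h x ∈ S}

/-- Recursive form of shattering a Set Littlestone tree of depth `n`. -/
def RecShatter {X Y : Type*} (𝒮 : Set (Set Y)) : ℕ → Set (X → Y) → Prop
  | 0, V => V.Nonempty
  | n + 1, V => ∃ x, ∀ y, ∃ S ∈ 𝒮, y ∉ S ∧ RecShatter 𝒮 n (restrictClass V x S)

theorem RecShatter.mono {X Y : Type*} {𝒮 : Set (Set Y)} {n : ℕ} {V W : Set (X → Y)}
    (hVW : V ⊆ W) (hV : RecShatter 𝒮 n V) : RecShatter 𝒮 n W := by
  induction n generalizing V W with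
  | zero => exact Set.Nonempty.mono hVW hV
  | succ n ih =>
    obtain ⟨x, hx⟩ := hV
    refine ⟨x, fun y => ?_⟩
    obtain ⟨S, hS, hy, hn⟩ := hx y
    exact ⟨S, hS, hy, ih (fun h hh => ⟨hVW hh.1, hh.2⟩) hn⟩

/-- The tree is rooted at the witness `x`; below the edge for `y` hangs the tree of the
restricted class, which reads the path with its first entry removed. -/
theorem RecShatter.slShatter {X Y : Type*} {𝒮 : Set (Set Y)} {n : ℕ} {V : Set (X → Y)}
    (hV : RecShatter 𝒮 n V) : SLShatter 𝒮 V n := by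
  induction n generalizing V with
  | zero =>
    obtain ⟨h, hh⟩ := hV
    exact ⟨fun t => t.elim0, fun t => t.elim0, fun t => t.elim0,
      fun y => ⟨fun t => t.elim0, h, hh, fun t => t.elim0⟩⟩
  | succ n ih =>
    obtain ⟨x, hx⟩ := hV
    choose S hS hy hn using hx
    choose N E hE hP using fun y => ih (hn y)
    refine ⟨fun t => Fin.cases (motive := fun t => (Fin (t : ℕ) → Y) → X) (fun _ => x)
        (fun t (ys : Fin ((t : ℕ) + 1) → Y) => N (ys 0) t (fun i => ys i.succ)) t,
      fun t => Fin.cases (motive := fun t => (Fin ((t : ℕ) + 1) → Y) → Set Y)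
        (fun ys => S (ys 0)) (fun t ys => E (ys 0) t (fun i => ys i.succ)) t, ?_, ?_⟩
    · intro t
      refine Fin.cases ?_ (fun t => ?_) t
      · exact fun ys => hS _
      · exact fun ys => hE _ _ _
    · intro y
      obtain ⟨h1, h, hh, h2⟩ := hP (y 0) (fun i => y i.succ)
      refine ⟨fun t => ?_, h, hh.1, fun t => ?_⟩
      · refine Fin.cases ?_ (fun t => ?_) t
        · exact hy (y 0)
        · exact h1 t
      · refine Fin.cases ?_ (fun t => ?_) t
        · exact hh.2
        · exact h2 t

/-- The least depth not shattered by `V`, i.e. one more than the Set Littlestone dimension of a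
nonempty `V`. The value is the junk `0` when `V` shatters every depth. -/
noncomputable def slRank {X Y : Type*} (𝒮 : Set (Set Y)) (V : Set (X → Y)) : ℕ :=
  sInf {n | ¬ RecShatter 𝒮 n V}

theorem slRank_le {X Y : Type*} {𝒮 : Set (Set Y)} {V : Set (X → Y)} {n : ℕ}
    (hn : ¬ RecShatter 𝒮 n V) : slRank 𝒮 V ≤ n :=
  Nat.sInf_le hn

theorem not_recShatter_slRank {X Y : Type*} {𝒮 : Set (Set Y)} {V : Set (X → Y)} {n : ℕ}
    (hn : ¬ RecShatter 𝒮 n V) : ¬ RecShatter 𝒮 (slRank 𝒮 V) V :=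
  Nat.sInf_mem (s := {n | ¬ RecShatter 𝒮 n V}) ⟨n, hn⟩

theorem slRank_pos {X Y : Type*} {𝒮 : Set (Set Y)} {V : Set (X → Y)} {n : ℕ}
    (hn : ¬ RecShatter 𝒮 n V) (hV : V.Nonempty) : 0 < slRank 𝒮 V := by
  rcases Nat.eq_zero_or_pos (slRank 𝒮 V) with h0 | h0
  · have := not_recShatter_slRank hn
    rw [h0] at this
    exact absurd hV this
  · exact h0

theorem slRank_mono {X Y : Type*} {𝒮 : Set (Set Y)} {V W : Set (X → Y)} {n : ℕ}
    (hVW : V ⊆ W) (hn : ¬ RecShatter 𝒮 n W) : slRank 𝒮 V ≤ slRank 𝒮 W :=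
  slRank_le fun h => not_recShatter_slRank hn (h.mono hVW)

/-- The optimal prediction: every feedback set that refutes it strictly lowers the rank. -/
theorem exists_prediction {X Y : Type*} {𝒮 : Set (Set Y)} {V : Set (X → Y)} {n : ℕ}
    (hn : ¬ RecShatter 𝒮 n V) (hV : V.Nonempty) (x : X) :
    ∃ y, ∀ S ∈ 𝒮, y ∉ S → slRank 𝒮 (restrictClass V x S) < slRank 𝒮 V := by
  obtain ⟨m, hm⟩ := Nat.exists_eq_succ_of_ne_zero (slRank_pos hn hV).ne'
  have hns := not_recShatter_slRank hn
  rw [hm] at hns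
  by_contra! hcon
  refine hns ⟨x, fun y => ?_⟩
  obtain ⟨S, hS, hy, hle⟩ := hcon y
  refine ⟨S, hS, hy, ?_⟩
  by_contra hm'
  have := slRank_le hm'
  omega

/-- The hypotheses of `H` consistent with all labeled examples in the history `L`. -/
def versionSpace {X Y : Type*} (H : Set (X → Y)) (L : List (X × Set Y)) : Set (X → Y) :=
  {h ∈ H | ∀ p ∈ L, h p.1 ∈ p.2}

theorem versionSpace_hist_succ {X Y : Type*} (H : Set (X → Y)) (x : ℕ → X) (S : ℕ → Set Y)
    (t : ℕ) : versionSpace H (hist x S (t + 1)) =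
      restrictClass (versionSpace H (hist x S t)) (x t) (S t) := by
  ext h
  simp [versionSpace, restrictClass, hist, List.range_succ, or_imp, forall_and, and_assoc]

open scoped Classical in
/-- If `ℋ` is nonempty and does not shatter any Set Littlestone tree of depth
`d+1`, then there is a deterministic online learner making at most `d` mistakes on every
realizable stream, of any length `T`. -/
theorem stmt3 {X Y : Type*} [MeasurableSpace Y]
    (𝒮 : Set (Set Y)) (h𝒮 : ∀ s ∈ 𝒮, MeasurableSet s)
    (H : Set (X → Y)) (hH : H.Nonempty) (d : ℕ)
    (hshat : ¬ SLShatter 𝒮 H (d + 1)) :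
    ∃ A : List (X × Set Y) → X → Y,
      ∀ (T : ℕ) (x : ℕ → X) (S : ℕ → Set Y),
        (∀ t < T, S t ∈ 𝒮) →
        (∃ h ∈ H, ∀ t < T, h (x t) ∈ S t) →
        ((Finset.range T).filter fun t => A (hist x S t) (x t) ∉ S t).card ≤ d := by
  have hrec : ¬ RecShatter 𝒮 (d + 1) H := fun h => hshat h.slShatter
  have hV : ∀ L, ¬ RecShatter 𝒮 (d + 1) (versionSpace H L) :=
    fun L h => hrec (h.mono fun _ hh => hh.1)
  -- On an inconsistent history any label will do; `hH` provides one.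
  have hpred : ∀ (L : List (X × Set Y)) (x : X), ∃ y, (versionSpace H L).Nonempty →
      ∀ S ∈ 𝒮, y ∉ S →
        slRank 𝒮 (restrictClass (versionSpace H L) x S) < slRank 𝒮 (versionSpace H L) := by
    intro L x
    by_cases hne : (versionSpace H L).Nonempty
    · obtain ⟨y, hy⟩ := exists_prediction (hV L) hne x
      exact ⟨y, fun _ => hy⟩
    · exact ⟨hH.some x, fun h => absurd h hne⟩
  choose A hA using hpred
  refine ⟨A, fun T x S hS hreal => ?_⟩
  obtain ⟨h, hh, hc⟩ := hreal
  have hne : ∀ t ≤ T, (versionSpace H (hist x S t)).Nonempty := by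
    intro t ht
    refine ⟨h, hh, fun p hp => ?_⟩
    simp only [hist, List.mem_map, List.mem_range] at hp
    obtain ⟨i, hi, rfl⟩ := hp
    exact hc i (by omega)
  -- Mistakes so far plus the rank of the current version space never exceed `d + 1`.
  have key : ∀ t ≤ T, ((Finset.range t).filter fun t => A (hist x S t) (x t) ∉ S t).card
      + slRank 𝒮 (versionSpace H (hist x S t)) ≤ d + 1 := by
    intro t
    induction t with
    | zero => intro _; simpa using slRank_le (hV _)
    | succ t ih =>
      intro ht
      have ih := ih (by omega)
      rw [versionSpace_hist_succ, Finset.range_add_one, Finset.filter_insert]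
      by_cases hm : A (hist x S t) (x t) ∈ S t
      · have : slRank 𝒮 (restrictClass (versionSpace H (hist x S t)) (x t) (S t)) ≤
            slRank 𝒮 (versionSpace H (hist x S t)) :=
          slRank_mono (fun _ hh => hh.1) (hV _)
        rw [if_neg (not_not.mpr hm)]
        omega
      · have := hA _ (x t) (hne t (by omega)) (S t) (hS t (by omega)) hm
        rw [if_pos hm, Finset.card_insert_of_notMem (by simp)]
        omega
  have h1 := key T le_rfl
  have h2 := slRank_pos (hV (hist x S T)) (hne T le_rfl)
  omega
end

section
/- Let (𝒴, σ(𝒴)) be a measurable space, 𝒮(𝒴) ⊆ σ(𝒴), 𝒳 a set, and ℋ ⊆ 𝒴^𝒳 nonempty. Fix γ ∈ (0,1] and suppose d ≥ 1 is such that ℋ does not γ-shatter any measure tree of depth d+1. Then for every T ∈ ℕ there exists a randomized online learner 𝒜 such that for every stream (x_1,S_1),…,(x_T,S_T) ∈ (𝒳 × 𝒮(𝒴))^T (not necessarily realizable), the expected regret satisfies Σ_{t=1}^T μ̂_t(𝒴 \ S_t) − inf_{h ∈ ℋ} Σ_{t=1}^T 1{h(x_t) ∉ S_t} ≤ d + γT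 + √(2 d T ln T). -/
/-!
The learner runs exponential weights over a family of `T ^ d` experts.

The property `Shat V n` restates, recursively in `n`, that a version space `V` shatters a measure
tree of depth `n` (`Shat.msShatter`). If `V` does not shatter depth `k + 1`, then at every instance
`x` some measure `μ` has the property that every feedback set `S` with `μ S ≤ 1 - γ` leads to a
restricted version space not shattering depth `k`. The expert attached to a set `L` of rounds
predicts with such a measure, and restricts its version space exactly at those rounds of `L` where
its prediction puts mass at most `1 - γ` on the feedback set.

Fix a comparator `h`. Taking for `L` the rounds consistent with `h`, the version space always
contains `h`, and each update lowers the depth bound by one, so there are at most `d` updates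
(`run_invariant`). Hence this expert loses at most `d + γ T` more than `h`
(`expert_loss_le`). The expert only depends on the update rounds, so `L` may be replaced by the
image of a function `Fin d → Fin T` (`run_congr`); if no round at all is consistent with `h`, the
comparator loses `T` and there is nothing to prove. Exponential weights over the `T ^ d` functions
`Fin d → Fin T` cost a further `d log T / η + η T / 2`, equal to `√(2 d T log T)` for
`η = √(2 d T log T) / T` (`exists_mixture`).
-/

open MeasureTheory

/-! ### Recursive form of shattering -/

/-- `V` shatters a measure tree of depth `n`, stated recursively from the root. -/
def Shat {X Y : Type*} [MeasurableSpace Y] (𝒮 : Set (Set Y)) (γ : ℝ) :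
    ℕ → Set (X → Y) → Prop
  | 0, V => V.Nonempty
  | n + 1, V => ∃ x : X, ∀ μ : ProbabilityMeasure Y, ∃ S ∈ 𝒮,
      μ.toMeasure S ≤ 1 - ENNReal.ofReal γ ∧ Shat 𝒮 γ n {h ∈ V | h x ∈ S}

/-- The trees of the children are glued below a new root: the first entry of a path selects the
child, and the rest of the path is read in the child's tree. -/
theorem Shat.msShatter {X Y : Type*} [MeasurableSpace Y] {𝒮 : Set (Set Y)} {γ : ℝ}
    (hγ : γ ≠ 0) : ∀ {n : ℕ} {V : Set (X → Y)}, Shat 𝒮 γ n V → MSShatter 𝒮 V γ n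
  | 0, V, ⟨h, hh⟩ =>
      ⟨fun t => t.elim0, fun t => t.elim0, fun t => t.elim0,
        fun _ => ⟨fun t => t.elim0, h, hh, fun t => t.elim0⟩⟩
  | n + 1, V, hV => by
      obtain ⟨x, hx⟩ := hV
      choose S hS hbad hsub using hx
      have ih := fun μ => (hsub μ).msShatter hγ
      choose node edge hmem hpath using ih
      refine ⟨fun t => Fin.cases (motive := fun t : Fin (n + 1) =>
            (Fin (t : ℕ) → ProbabilityMeasure Y) → X)
          (fun _ => x) (fun t ms => node (ms ⟨0, t.1.succ_pos⟩) t
            (Fin.tail (n := (t : ℕ)) (α := fun _ => ProbabilityMeasure Y) ms)) t,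
        fun t => Fin.cases (motive := fun t : Fin (n + 1) =>
            (Fin ((t : ℕ) + 1) → ProbabilityMeasure Y) → Set Y)
          (fun ms => S (ms 0)) (fun t ms => edge (ms 0) t (Fin.tail ms)) t, ?_, ?_⟩
      · intro t
        refine Fin.cases ?_ (fun t => ?_) t
        · exact fun ms => hS _
        · exact fun ms => hmem _ _ _
      · intro μ
        obtain ⟨h1, h, hh, h2⟩ := hpath (μ 0) (Fin.tail μ)
        refine ⟨fun t => ?_, h, hh.1, fun t => ?_⟩
        · refine Fin.cases ?_ (fun t => ?_) t
          · rw [if_neg hγ]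
            exact hbad (μ 0)
          · exact h1 t
        · refine Fin.cases ?_ (fun t => ?_) t
          · exact hh.2
          · exact h2 t

/-! ### The experts -/

theorem hist_succ {X Y : Type*} (x : ℕ → X) (S : ℕ → Set Y) (t : ℕ) :
    hist x S (t + 1) = hist x S t ++ [(x t, S t)] := by
  simp [hist, List.range_succ]

section Experts

variable {X Y : Type*} [MeasurableSpace Y]

/-- `μ` is a safe prediction at `x` for the version space `V` at level `k`: a feedback set receiving
mass at most `1 - γ` restricts `V` to a class that does not shatter depth `k`. -/
def Safe (𝒮 : Set (Set Y)) (γ : ℝ) (V : Set (X → Y)) (k : ℕ) (x : X)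
    (μ : ProbabilityMeasure Y) : Prop :=
  ∀ S ∈ 𝒮, μ.toMeasure S ≤ 1 - ENNReal.ofReal γ → ¬ Shat 𝒮 γ k {h ∈ V | h x ∈ S}

theorem exists_safe {𝒮 : Set (Set Y)} {γ : ℝ} {V : Set (X → Y)} {k : ℕ}
    (hV : ¬ Shat 𝒮 γ (k + 1) V) (x : X) : ∃ μ, Safe 𝒮 γ V k x μ := by
  by_contra hcon
  apply hV
  refine ⟨x, fun μ => ?_⟩
  by_contra h
  exact hcon ⟨μ, fun S hS hb hs => h ⟨S, hS, hb, hs⟩⟩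

open scoped Classical in
/-- A safe prediction if there is one, and a Dirac mass at `h₀ x` otherwise. -/
noncomputable def safePred (𝒮 : Set (Set Y)) (γ : ℝ) (h₀ : X → Y) (V : Set (X → Y)) (k : ℕ)
    (x : X) : ProbabilityMeasure Y :=
  if h : ∃ μ, Safe 𝒮 γ V k x μ then h.choose else ⟨Measure.dirac (h₀ x), inferInstance⟩

theorem safePred_safe {𝒮 : Set (Set Y)} {γ : ℝ} {V : Set (X → Y)} {k : ℕ} (h₀ : X → Y)
    (hV : ¬ Shat 𝒮 γ (k + 1) V) (x : X) : Safe 𝒮 γ V k x (safePred 𝒮 γ h₀ V k x) := by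
  have h := exists_safe hV x
  have heq : safePred 𝒮 γ h₀ V k x = h.choose := dif_pos h
  rw [heq]
  exact h.choose_spec

/-- The feedback `e.2` on the instance `e.1` receives mass at most `1 - γ` from the prediction made
in the state `s` (round, version space, level). -/
def Bad (𝒮 : Set (Set Y)) (γ : ℝ) (h₀ : X → Y) (s : ℕ × Set (X → Y) × ℕ) (e : X × Set Y) : Prop :=
  (safePred 𝒮 γ h₀ s.2.1 s.2.2 e.1).toMeasure e.2 ≤ 1 - ENNReal.ofReal γ

open scoped Classical in
/-- One round of the expert attached to the set of rounds `L`. The state is the number of the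
round, the version space, and the level `k` such that the version space is meant not to shatter
depth `k + 1`. -/
noncomputable def expertStep (𝒮 : Set (Set Y)) (γ : ℝ) (h₀ : X → Y) (L : ℕ → Prop)
    (s : ℕ × Set (X → Y) × ℕ) (e : X × Set Y) : ℕ × Set (X → Y) × ℕ :=
  if L s.1 ∧ Bad 𝒮 γ h₀ s e then (s.1 + 1, {h ∈ s.2.1 | h e.1 ∈ e.2}, s.2.2 - 1)
  else (s.1 + 1, s.2)

/-- The state of the expert attached to `L` after the history `l`. -/
noncomputable def run (𝒮 : Set (Set Y)) (γ : ℝ) (h₀ : X → Y) (H : Set (X → Y)) (d : ℕ)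
    (L : ℕ → Prop) (l : List (X × Set Y)) : ℕ × Set (X → Y) × ℕ :=
  l.foldl (expertStep 𝒮 γ h₀ L) (0, H, d)

/-- The prediction of the expert attached to `L`. -/
noncomputable def expert (𝒮 : Set (Set Y)) (γ : ℝ) (h₀ : X → Y) (H : Set (X → Y)) (d : ℕ)
    (L : ℕ → Prop) (l : List (X × Set Y)) (x : X) : ProbabilityMeasure Y :=
  safePred 𝒮 γ h₀ (run 𝒮 γ h₀ H d L l).2.1 (run 𝒮 γ h₀ H d L l).2.2 x

variable (𝒮 : Set (Set Y)) (γ : ℝ) (h₀ : X → Y) (H : Set (X → Y)) (d : ℕ)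

theorem run_succ (L : ℕ → Prop) (x : ℕ → X) (S : ℕ → Set Y) (t : ℕ) :
    run 𝒮 γ h₀ H d L (hist x S (t + 1)) =
      expertStep 𝒮 γ h₀ L (run 𝒮 γ h₀ H d L (hist x S t)) (x t, S t) := by
  simp [run, hist_succ, List.foldl_append]

theorem run_fst (L : ℕ → Prop) (x : ℕ → X) (S : ℕ → Set Y) (t : ℕ) :
    (run 𝒮 γ h₀ H d L (hist x S t)).1 = t := by
  induction t with
  | zero => simp [run, hist]
  | succ t ih =>
    rw [run_succ, expertStep]
    split_ifs <;> simp [ih]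

/-- The prediction of the expert attached to `L` puts mass at most `1 - γ` on `S t`. -/
def BadAt (L : ℕ → Prop) (x : ℕ → X) (S : ℕ → Set Y) (t : ℕ) : Prop :=
  Bad 𝒮 γ h₀ (run 𝒮 γ h₀ H d L (hist x S t)) (x t, S t)

/-- The run only depends on which of the badly predicted rounds lie in `L`. -/
theorem run_congr {L L' : ℕ → Prop} {x : ℕ → X} {S : ℕ → Set Y} {T : ℕ}
    (h1 : ∀ t < T, L t → BadAt 𝒮 γ h₀ H d L x S t → L' t)
    (h2 : ∀ t < T, L' t → L t) {t : ℕ} (ht : t ≤ T) :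
    run 𝒮 γ h₀ H d L' (hist x S t) = run 𝒮 γ h₀ H d L (hist x S t) := by
  induction t with
  | zero => simp [run, hist]
  | succ t ih =>
    have hiff : (L' t ∧ BadAt 𝒮 γ h₀ H d L x S t) ↔ (L t ∧ BadAt 𝒮 γ h₀ H d L x S t) :=
      ⟨fun h => ⟨h2 t ht h.1, h.2⟩, fun h => ⟨h1 t ht h.1 h.2, h.2⟩⟩
    rw [run_succ, run_succ, ih (by omega), expertStep, expertStep, run_fst]
    by_cases hc : L t ∧ BadAt 𝒮 γ h₀ H d L x S t
    · exact (if_pos (hiff.mpr hc)).trans (if_pos hc).symm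
    · exact (if_neg (mt hiff.mp hc)).trans (if_neg hc).symm

open scoped Classical in
/-- When `L` consists of the rounds consistent with `h`, the version space keeps `h`, and every
update lowers the level by exactly one. -/
theorem run_invariant {h : X → Y} (hh : h ∈ H) (hH : ¬ Shat 𝒮 γ (d + 1) H)
    {x : ℕ → X} {S : ℕ → Set Y} {T : ℕ} (hS : ∀ t < T, S t ∈ 𝒮) {t : ℕ} (ht : t ≤ T) :
    let L : ℕ → Prop := fun t => h (x t) ∈ S t
    h ∈ (run 𝒮 γ h₀ H d L (hist x S t)).2.1 ∧
    ¬ Shat 𝒮 γ ((run 𝒮 γ h₀ H d L (hist x S t)).2.2 + 1)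
        (run 𝒮 γ h₀ H d L (hist x S t)).2.1 ∧
    (run 𝒮 γ h₀ H d L (hist x S t)).2.2 +
      ((Finset.range t).filter fun t => L t ∧ BadAt 𝒮 γ h₀ H d L x S t).card = d := by
  intro L
  induction t with
  | zero => simpa [run, hist] using ⟨hh, hH⟩
  | succ t ih =>
    obtain ⟨i1, i2, i3⟩ := ih (by omega)
    rw [run_succ, Finset.range_add_one, Finset.filter_insert, expertStep, run_fst]
    by_cases hc : L t ∧ BadAt 𝒮 γ h₀ H d L x S t
    · rw [if_pos hc, if_pos (show L t ∧ Bad 𝒮 γ h₀ _ _ from hc),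
        Finset.card_insert_of_notMem (by simp)]
      have hsafe := safePred_safe h₀ i2 (x t) (S t) (hS t ht) hc.2
      have hmem : h ∈ {g ∈ (run 𝒮 γ h₀ H d L (hist x S t)).2.1 | g (x t) ∈ S t} := ⟨i1, hc.1⟩
      -- At level `0` the restricted version space would be empty, yet it contains `h`.
      have hpos : (run 𝒮 γ h₀ H d L (hist x S t)).2.2 ≠ 0 := by
        intro h0
        rw [h0] at hsafe
        exact hsafe ⟨h, hmem⟩
      refine ⟨hmem, ?_, ?_⟩
      · simp only
        rwa [Nat.sub_add_cancel (Nat.one_le_iff_ne_zero.mpr hpos)]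
      · simp only
        omega
    · rw [if_neg hc, if_neg (show ¬ (L t ∧ Bad 𝒮 γ h₀ _ _) from hc)]
      exact ⟨i1, i2, i3⟩

open scoped Classical in
/-- A round is lost with probability at most `γ` unless the prediction is bad; a bad prediction is
charged to an update if the round is consistent with `h`, and to the loss of `h` otherwise. -/
theorem expert_loss_le {h : X → Y} (hh : h ∈ H) (hH : ¬ Shat 𝒮 γ (d + 1) H)
    (hγ0 : 0 < γ) (hγ1 : γ ≤ 1) (h𝒮 : ∀ s ∈ 𝒮, MeasurableSet s)
    {x : ℕ → X} {S : ℕ → Set Y} {T : ℕ} (hS : ∀ t < T, S t ∈ 𝒮) :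
    ∑ t ∈ Finset.range T,
        (expert 𝒮 γ h₀ H d (fun t => h (x t) ∈ S t) (hist x S t) (x t)).toMeasure.real (S t)ᶜ ≤
      d + γ * T + (((Finset.range T).filter fun t => h (x t) ∉ S t).card : ℝ) := by
  set L : ℕ → Prop := fun t => h (x t) ∈ S t with hL
  have hcard : (((Finset.range T).filter fun t => L t ∧ BadAt 𝒮 γ h₀ H d L x S t).card : ℝ)
      ≤ d := by
    have := (run_invariant 𝒮 γ h₀ H d (x := x) hh hH hS le_rfl).2.2
    exact_mod_cast (Nat.le_add_left _ _).trans this.le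
  have hround : ∀ t ∈ Finset.range T,
      (expert 𝒮 γ h₀ H d L (hist x S t) (x t)).toMeasure.real (S t)ᶜ ≤
        (if L t ∧ BadAt 𝒮 γ h₀ H d L x S t then (1 : ℝ) else 0) + γ +
          (if h (x t) ∉ S t then (1 : ℝ) else 0) := by
    intro t ht
    have ht' := Finset.mem_range.mp ht
    have hle1 : (expert 𝒮 γ h₀ H d L (hist x S t) (x t)).toMeasure.real (S t)ᶜ ≤ 1 :=
      measureReal_le_one
    by_cases hb : BadAt 𝒮 γ h₀ H d L x S t
    · by_cases hc : h (x t) ∈ S t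
      · have : L t := hc
        simp only [hb, hc, this, and_self, not_true, if_true, if_false]
        linarith
      · have : ¬ L t := hc
        simp only [hc, this, false_and, not_false_iff, if_true, if_false]
        linarith
    · have hlt : 1 - ENNReal.ofReal γ <
          (expert 𝒮 γ h₀ H d L (hist x S t) (x t)).toMeasure (S t) := not_le.mp hb
      have hreal : 1 - γ < (expert 𝒮 γ h₀ H d L (hist x S t) (x t)).toMeasure.real (S t) := by
        have h1 := (ENNReal.toReal_lt_toReal (by simp) (measure_ne_top _ _)).mpr hlt
        rwa [ENNReal.toReal_sub_of_le (by simpa using hγ1) (by simp), ENNReal.toReal_one,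
          ENNReal.toReal_ofReal hγ0.le] at h1
      rw [probReal_compl_eq_one_sub (h𝒮 _ (hS t ht'))]
      have : (0 : ℝ) ≤ if h (x t) ∉ S t then (1 : ℝ) else 0 := by split_ifs <;> norm_num
      simp only [hb, and_false, if_false]
      linarith
  refine (Finset.sum_le_sum hround).trans ?_
  rw [Finset.sum_add_distrib, Finset.sum_add_distrib, Finset.sum_boole, Finset.sum_boole,
    Finset.sum_const, Finset.card_range, nsmul_eq_mul]
  linarith

end Experts

/-! ### Exponential weights -/

theorem exp_neg_le_quadratic {y : ℝ} (hy : 0 ≤ y) : Real.exp (-y) ≤ 1 - y + y ^ 2 / 2 := by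
  have h1 := Real.quadratic_le_exp_of_nonneg hy
  have h2 : 0 < 1 - y + y ^ 2 / 2 := by nlinarith [sq_nonneg (y - 1)]
  rw [Real.exp_neg, inv_le_comm₀ (Real.exp_pos y) h2]
  refine le_trans ?_ h1
  rw [inv_le_iff_one_le_mul₀ h2]
  nlinarith [sq_nonneg (y ^ 2)]

/-- Regret of exponential weights, obtained from the potential
`∑ i, exp (-η C i t)`, where `C i t` is the cumulative loss of expert `i` before
round `t`, and `m t` is the weighted average loss in round `t`. -/
theorem exp_weights {ι : Type*} [Fintype ι] [Nonempty ι] (η : ℝ) (hη : 0 < η) (ℓ : ι → ℕ → ℝ)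
    (h0 : ∀ i t, 0 ≤ ℓ i t) (h1 : ∀ i t, ℓ i t ≤ 1) (m : ℕ → ℝ)
    (hm : ∀ t, m t * ∑ i, Real.exp (-η * ∑ s ∈ Finset.range t, ℓ i s) =
      ∑ i, Real.exp (-η * ∑ s ∈ Finset.range t, ℓ i s) * ℓ i t) (T : ℕ) (i : ι) :
    ∑ t ∈ Finset.range T, m t ≤
      ∑ t ∈ Finset.range T, ℓ i t + Real.log (Fintype.card ι) / η + η * T / 2 := by
  have key : ∀ t : ℕ, ∑ i, Real.exp (-η * ∑ s ∈ Finset.range t, ℓ i s) ≤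
      Fintype.card ι * Real.exp (-η * ∑ s ∈ Finset.range t, m s + η ^ 2 / 2 * t) := by
    intro t
    induction t with
    | zero => simp
    | succ t ih =>
      calc ∑ i, Real.exp (-η * ∑ s ∈ Finset.range (t + 1), ℓ i s)
          ≤ ∑ i, Real.exp (-η * ∑ s ∈ Finset.range t, ℓ i s) *
              (1 - η * ℓ i t + η ^ 2 / 2) := by
            refine Finset.sum_le_sum fun i _ => ?_
            rw [Finset.sum_range_succ, mul_add, Real.exp_add]
            refine mul_le_mul_of_nonneg_left ?_ (Real.exp_pos _).le
            have := exp_neg_le_quadratic (mul_nonneg hη.le (h0 i t))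
            rw [neg_mul]
            have hsq : (η * ℓ i t) ^ 2 ≤ η ^ 2 := by
              refine pow_le_pow_left₀ (mul_nonneg hη.le (h0 i t)) ?_ 2
              exact mul_le_of_le_one_right hη.le (h1 i t)
            linarith
        _ = (∑ i, Real.exp (-η * ∑ s ∈ Finset.range t, ℓ i s)) *
              (-η * m t + η ^ 2 / 2 + 1) := by
            have hexp : ∀ i, Real.exp (-η * ∑ s ∈ Finset.range t, ℓ i s) *
                (1 - η * ℓ i t + η ^ 2 / 2) =
                Real.exp (-η * ∑ s ∈ Finset.range t, ℓ i s) * (1 + η ^ 2 / 2) -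
                η * (Real.exp (-η * ∑ s ∈ Finset.range t, ℓ i s) * ℓ i t) := fun i => by ring
            simp_rw [hexp]
            rw [Finset.sum_sub_distrib, ← Finset.sum_mul, ← Finset.mul_sum, ← hm]
            ring
        _ ≤ (∑ i, Real.exp (-η * ∑ s ∈ Finset.range t, ℓ i s)) *
              Real.exp (-η * m t + η ^ 2 / 2) := by
            refine mul_le_mul_of_nonneg_left (Real.add_one_le_exp _) ?_
            exact Finset.sum_nonneg fun i _ => (Real.exp_pos _).le
        _ ≤ _ := by
            refine (mul_le_mul_of_nonneg_right ih (Real.exp_pos _).le).trans_eq ?_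
            rw [mul_assoc, ← Real.exp_add, Finset.sum_range_succ]
            push_cast
            ring_nf
  have hcard : (0 : ℝ) < Fintype.card ι := by exact_mod_cast Fintype.card_pos
  have hle : Real.exp (-η * ∑ s ∈ Finset.range T, ℓ i s) ≤
      Fintype.card ι * Real.exp (-η * ∑ s ∈ Finset.range T, m s + η ^ 2 / 2 * T) :=
    (Finset.single_le_sum (f := fun i => Real.exp (-η * ∑ s ∈ Finset.range T, ℓ i s))
      (fun i _ => (Real.exp_pos _).le) (Finset.mem_univ i)).trans (key T)
  have hlog := Real.log_le_log (Real.exp_pos _) hle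
  rw [Real.log_exp, Real.log_mul hcard.ne' (Real.exp_pos _).ne', Real.log_exp] at hlog
  have : η * ∑ t ∈ Finset.range T, m t ≤ η * (∑ t ∈ Finset.range T, ℓ i t +
      Real.log (Fintype.card ι) / η + η * T / 2) := by
    have e : η * (Real.log (Fintype.card ι) / η) = Real.log (Fintype.card ι) := by
      field_simp
    rw [mul_add, mul_add, e]
    nlinarith
  exact le_of_mul_le_mul_left this hη

section Mixture

variable {X Y : Type*} [MeasurableSpace Y]

/-- The cumulative loss of the predictor `E` on a history. The fold carries the part of the history
already read, since the prediction of `E` depends on it. -/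
noncomputable def cumLoss (E : List (X × Set Y) → X → ProbabilityMeasure Y)
    (l : List (X × Set Y)) : ℝ :=
  (l.foldl (fun (s : List (X × Set Y) × ℝ) e =>
    (s.1 ++ [e], s.2 + (E s.1 e.1).toMeasure.real e.2ᶜ)) ([], 0)).2

theorem cumLoss_hist (E : List (X × Set Y) → X → ProbabilityMeasure Y) (x : ℕ → X)
    (S : ℕ → Set Y) (t : ℕ) :
    cumLoss E (hist x S t) =
      ∑ s ∈ Finset.range t, (E (hist x S s) (x s)).toMeasure.real (S s)ᶜ := by
  suffices h : (hist x S t).foldl (fun (s : List (X × Set Y) × ℝ) e =>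
      (s.1 ++ [e], s.2 + (E s.1 e.1).toMeasure.real e.2ᶜ)) ([], 0) =
      (hist x S t, ∑ s ∈ Finset.range t, (E (hist x S s) (x s)).toMeasure.real (S s)ᶜ) by
    rw [cumLoss, h]
  induction t with
  | zero => simp [hist]
  | succ t ih =>
    rw [hist_succ, List.foldl_append, ih, Finset.sum_range_succ]
    simp

theorem exists_mixture_measure {ι : Type*} [Fintype ι] [Nonempty ι] (w : ι → ℝ)
    (hw : ∀ i, 0 < w i) (μ : ι → ProbabilityMeasure Y) :
    ∃ ν : ProbabilityMeasure Y, ∀ s : Set Y,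
      ν.toMeasure.real s * ∑ i, w i = ∑ i, w i * (μ i).toMeasure.real s := by
  have hW : 0 < ∑ i, w i := Finset.sum_pos (fun i _ => hw i) Finset.univ_nonempty
  have happ : ∀ s : Set Y, (∑ i, ENNReal.ofReal (w i / ∑ j, w j) • (μ i).toMeasure) s =
      ∑ i, ENNReal.ofReal (w i / ∑ j, w j) * (μ i).toMeasure s := by
    intro s
    simp [Measure.finsetSum_apply]
  refine ⟨⟨∑ i, ENNReal.ofReal (w i / ∑ j, w j) • (μ i).toMeasure, ⟨?_⟩⟩, fun s => ?_⟩
  · rw [happ]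
    simp only [measure_univ, mul_one]
    rw [← ENNReal.ofReal_sum_of_nonneg (fun i _ => (div_pos (hw i) hW).le), ← Finset.sum_div,
      div_self hW.ne', ENNReal.ofReal_one]
  · simp only [ProbabilityMeasure.coe_mk, Measure.real]
    rw [happ, ENNReal.toReal_sum
      (fun i _ => ENNReal.mul_ne_top ENNReal.ofReal_ne_top (measure_ne_top _ _)),
      Finset.sum_mul]
    refine Finset.sum_congr rfl fun i _ => ?_
    rw [ENNReal.toReal_mul, ENNReal.toReal_ofReal (div_pos (hw i) hW).le]
    field_simp

/-- Exponential weights over finitely many randomized learners. -/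
theorem exists_mixture {ι : Type*} [Fintype ι] [Nonempty ι] (η : ℝ) (hη : 0 < η)
    (E : ι → List (X × Set Y) → X → ProbabilityMeasure Y) :
    ∃ A : List (X × Set Y) → X → ProbabilityMeasure Y,
      ∀ (x : ℕ → X) (S : ℕ → Set Y) (T : ℕ) (i : ι),
        ∑ t ∈ Finset.range T, (A (hist x S t) (x t)).toMeasure.real (S t)ᶜ ≤
          ∑ t ∈ Finset.range T, (E i (hist x S t) (x t)).toMeasure.real (S t)ᶜ +
            Real.log (Fintype.card ι) / η + η * T / 2 := by
  choose A hA using fun (l : List (X × Set Y)) (x : X) =>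
    exists_mixture_measure (fun i => Real.exp (-η * cumLoss (E i) l))
      (fun i => Real.exp_pos _) (fun i => E i l x)
  refine ⟨A, fun x S T i => ?_⟩
  refine exp_weights η hη (fun i t => (E i (hist x S t) (x t)).toMeasure.real (S t)ᶜ)
    (fun _ _ => measureReal_nonneg) (fun _ _ => measureReal_le_one) _ (fun t => ?_) T i
  have := hA (hist x S t) (x t) (S t)ᶜ
  simpa only [cumLoss_hist] using this

end Mixture

open scoped Classical in
/-- If `ℋ` is nonempty, `γ ∈ (0,1]`, `d ≥ 1`, and `ℋ` does not `γ`-shatter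
any measure tree of depth `d+1`, then for every horizon `T` there is a randomized online
learner whose expected regret on every stream (against every `h ∈ ℋ`, hence against the
best-in-hindsight hypothesis) is at most `d + γT + √(2dT ln T)`. -/
theorem stmt7 {X Y : Type*} [MeasurableSpace Y]
    (𝒮 : Set (Set Y)) (h𝒮 : ∀ s ∈ 𝒮, MeasurableSet s)
    (H : Set (X → Y)) (hH : H.Nonempty)
    (γ : ℝ) (hγ0 : 0 < γ) (hγ1 : γ ≤ 1) (d : ℕ) (hd : 1 ≤ d)
    (hshat : ¬ MSShatter 𝒮 H γ (d + 1)) (T : ℕ) :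
    ∃ A : List (X × Set Y) → X → ProbabilityMeasure Y,
      ∀ (x : ℕ → X) (S : ℕ → Set Y),
        (∀ t < T, S t ∈ 𝒮) →
        ∀ h ∈ H,
          (∑ t ∈ Finset.range T, (A (hist x S t) (x t)).toMeasure ((S t)ᶜ)).toReal -
              (((Finset.range T).filter fun t => h (x t) ∉ S t).card : ℝ) ≤
            d + γ * T + Real.sqrt (2 * d * T * Real.log T) := by
  have hSh : ¬ Shat 𝒮 γ (d + 1) H := fun h => hshat (h.msShatter hγ0.ne')
  obtain ⟨h₀, -⟩ := id hH
  have hconv : ∀ (A : List (X × Set Y) → X → ProbabilityMeasure Y) (x : ℕ → X) (S : ℕ → Set Y),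
      (∑ t ∈ Finset.range T, (A (hist x S t) (x t)).toMeasure ((S t)ᶜ)).toReal =
        ∑ t ∈ Finset.range T, (A (hist x S t) (x t)).toMeasure.real (S t)ᶜ := fun A x S =>
    ENNReal.toReal_sum fun _ _ => measure_ne_top _ _
  have htriv : ∀ (A : List (X × Set Y) → X → ProbabilityMeasure Y) (x : ℕ → X) (S : ℕ → Set Y),
      ∑ t ∈ Finset.range T, (A (hist x S t) (x t)).toMeasure.real (S t)ᶜ ≤ (T : ℝ) := by
    intro A x S
    refine (Finset.sum_le_sum (fun t _ => measureReal_le_one)).trans ?_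
    simp
  have hd' : (1 : ℝ) ≤ d := by exact_mod_cast hd
  have hγT : 0 ≤ γ * T := mul_nonneg hγ0.le (Nat.cast_nonneg T)
  simp only [hconv]
  rcases Nat.lt_or_ge T 2 with hT | hT
  · -- For `T ≤ 1` the total loss is at most `1 ≤ d`.
    refine ⟨fun _ x => ⟨Measure.dirac (h₀ x), inferInstance⟩, fun x S _ h _ => ?_⟩
    have h1 := htriv (fun _ x => ⟨Measure.dirac (h₀ x), inferInstance⟩) x S
    have h2 : (T : ℝ) ≤ 1 := by exact_mod_cast Nat.lt_succ_iff.mp hT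
    have h3 := Real.sqrt_nonneg (2 * d * T * Real.log T)
    have h4 : (0 : ℝ) ≤ (((Finset.range T).filter fun t => h (x t) ∉ S t).card : ℝ) :=
      Nat.cast_nonneg _
    linarith
  · have hT' : (2 : ℝ) ≤ T := by exact_mod_cast hT
    have hlog : 0 < Real.log T := Real.log_pos (by linarith)
    have hrad : 0 < 2 * d * T * Real.log T := by positivity
    have hspos := Real.sqrt_pos.mpr hrad
    have hsq := Real.sq_sqrt hrad.le
    set s := Real.sqrt (2 * d * T * Real.log T) with hs
    have : Nonempty (Fin T) := ⟨⟨0, by omega⟩⟩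
    have hη : 0 < s / T := by positivity
    obtain ⟨A, hA⟩ := exists_mixture (s / T) hη
      (fun f : Fin d → Fin T => expert 𝒮 γ h₀ H d (fun t => ∃ j, (f j : ℕ) = t))
    refine ⟨A, fun x S hS h hh => ?_⟩
    by_cases hex : ∃ t₀ < T, h (x t₀) ∈ S t₀
    · obtain ⟨t₀, ht₀, hc₀⟩ := hex
      set L : ℕ → Prop := fun t => h (x t) ∈ S t with hL
      set B := (Finset.range T).filter fun t => L t ∧ BadAt 𝒮 γ h₀ H d L x S t with hB
      have hBcard : B.card ≤ d := by
        have := (run_invariant 𝒮 γ h₀ H d (x := x) hh hSh hS le_rfl).2.2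
        exact (Nat.le_add_left _ _).trans this.le
      -- The set `B` of update rounds is padded with the consistent round `t₀` to an image of `Fin d`.
      obtain ⟨f, hf1, hf2⟩ : ∃ f : Fin d → Fin T, (∀ t ∈ B, ∃ j, (f j : ℕ) = t) ∧
          ∀ j, L (f j) := by
        have hlt : ∀ t : B, (t : ℕ) < T := fun t =>
          Finset.mem_range.mp (Finset.mem_filter.mp t.2).1
        refine ⟨fun j => if hj : (j : ℕ) < B.card then
          ⟨B.equivFin.symm ⟨j, hj⟩, hlt _⟩ else ⟨t₀, ht₀⟩, fun t ht => ?_, fun j => ?_⟩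
        · refine ⟨⟨B.equivFin ⟨t, ht⟩, (B.equivFin ⟨t, ht⟩).2.trans_le hBcard⟩, ?_⟩
          simp
        · by_cases hj : (j : ℕ) < B.card
          · simp only [hj, dif_pos]
            exact (Finset.mem_filter.mp (B.equivFin.symm ⟨j, hj⟩).2).2.1
          · simp only [hj, dif_neg, not_false_iff]
            exact hc₀
      have hrun : ∀ t ∈ Finset.range T,
          expert 𝒮 γ h₀ H d (fun t => ∃ j, (f j : ℕ) = t) (hist x S t) (x t) =
            expert 𝒮 γ h₀ H d L (hist x S t) (x t) := by
        intro t ht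
        have := run_congr 𝒮 γ h₀ H d (L := L) (L' := fun t => ∃ j, (f j : ℕ) = t)
          (x := x) (S := S) (T := T)
          (fun t ht hLt hb => hf1 t (Finset.mem_filter.mpr ⟨Finset.mem_range.mpr ht, hLt, hb⟩))
          (fun t _ ⟨j, hj⟩ => hj ▸ hf2 j) (Finset.mem_range.mp ht).le
        rw [expert, expert, this]
      have hmix := hA x S T f
      have hsum : ∑ t ∈ Finset.range T, (expert 𝒮 γ h₀ H d (fun t => ∃ j, (f j : ℕ) = t)
            (hist x S t) (x t)).toMeasure.real (S t)ᶜ =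
          ∑ t ∈ Finset.range T, (expert 𝒮 γ h₀ H d L (hist x S t) (x t)).toMeasure.real (S t)ᶜ :=
        Finset.sum_congr rfl fun t ht => by rw [hrun t ht]
      rw [hsum] at hmix
      have hexp := expert_loss_le 𝒮 γ h₀ H d (x := x) hh hSh hγ0 hγ1 h𝒮 hS
      have hN : Real.log (Fintype.card (Fin d → Fin T)) = d * Real.log T := by
        simp
      -- Both terms of the price of exponential weights equal `s / 2`.
      have e1 : (d : ℝ) * Real.log T / (s / T) = s / 2 := by
        field_simp
        linarith
      have e2 : s / T * T / 2 = s / 2 := by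
        field_simp
      rw [hN, e1, e2] at hmix
      linarith
    · have hall : (Finset.range T).filter (fun t => h (x t) ∉ S t) = Finset.range T :=
        Finset.filter_true_of_mem fun t ht hc => hex ⟨t, Finset.mem_range.mp ht, hc⟩
      have h1 := htriv A x S
      rw [hall, Finset.card_range]
      linarith
end

section
/- Let (𝒴, σ(𝒴)) be a measurable space, 𝒮(𝒴) ⊆ σ(𝒴), 𝒳 a set, and ℋ ⊆ 𝒴^𝒳. Suppose ℋ shatters a 2-Set Littlestone tree of depth d ≥ 1, and let T = k·d for some odd k ∈ ℕ. Then for every randomized online learner 𝒜 there exists a stream (x_1,S_1),…,(x_T,S_T) ∈ (𝒳 × 𝒮(𝒴))^T on which the expected regret satisfies Σ_{t=1}^T μ̂_t(𝒴 \ S_t) − inf_{h ∈ ℋ} Σ_{t=1}^T 1{h(x_t) ∉ S_t} ≥ √(dT/8). -/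
/-!
The adversary runs through the tree block by block, each block consisting of `k` rounds at the
current node. In every round it picks one of the two disjoint sets `S 0`, `S 1` labeling the
outgoing edges; every prediction `μ` satisfies `μ (S 0)ᶜ + μ (S 1)ᶜ ≥ 1`. At the end of the block
it descends along the edge whose set was used more often, so that the hypotheses surviving at the
end of the path err in that block only on the minority rounds.

Choosing the sets by fair coins would give expected regret `𝔼|S_k| / 2` per block, where `S_k` is
the simple random walk. The proof derandomizes this: `walkAbs n s = 𝔼|s + S_n|` is the average of
its two successors, so in each round one of the two choices preserves the potential
(`exists_block`), and induction on the depth (`exists_list`, via `PSLShatter.succ`) yields regret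
at least `d * walkAbs k 0 / 2`.

It remains to see `𝔼|S_k| ≥ √(k/2)` for `k = 2m+1` (`sqrt_le_walkAbs`). The increment
`𝔼|S_{n+1}| - 𝔼|S_n|` is `ℙ(S_n = 0)`, which for `n = 2i` equals `a_i = centralBinom i / 4 ^ i`;
hence `𝔼|S_k| ≥ ∑_{i ≤ m} a_i = (2m+1) a_m`, and `4 m a_m² ≥ 1` for `m ≥ 1`.
-/

open MeasureTheory

/-! ### The simple random walk -/

/-- `walkAbs n s = 𝔼|s + S_n|` for the simple random walk `S_n`. -/
noncomputable def walkAbs : ℕ → ℤ → ℝ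
  | 0, s => |(s : ℝ)|
  | n + 1, s => (walkAbs n (s + 1) + walkAbs n (s - 1)) / 2

/-- `walkHit n s = ℙ(s + S_n = 0)` for the simple random walk `S_n`. -/
noncomputable def walkHit : ℕ → ℤ → ℝ
  | 0, s => if s = 0 then 1 else 0
  | n + 1, s => (walkHit n (s + 1) + walkHit n (s - 1)) / 2

lemma walkHit_nonneg (n : ℕ) (s : ℤ) : 0 ≤ walkHit n s := by
  induction n generalizing s with
  | zero => unfold walkHit; split_ifs <;> norm_num
  | succ n ih =>
    have h1 := ih (s + 1)
    have h2 := ih (s - 1)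
    unfold walkHit
    linarith

/-- The walk `s + S_n` gains in expected absolute value exactly when it sits at `0`. -/
lemma walkAbs_succ (n : ℕ) (s : ℤ) : walkAbs (n + 1) s = walkAbs n s + walkHit n s := by
  induction n generalizing s with
  | zero =>
    simp only [walkAbs, walkHit]
    rcases lt_trichotomy s 0 with h | h | h
    · have h' : (s : ℝ) + 1 ≤ 0 := by exact_mod_cast h
      push_cast
      rw [if_neg h.ne, abs_of_nonpos h', abs_of_nonpos (by linarith), abs_of_nonpos (by linarith)]
      ring
    · subst h; norm_num
    · have h' : (1 : ℝ) ≤ s := by exact_mod_cast h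
      push_cast
      rw [if_neg h.ne', abs_of_nonneg (by linarith), abs_of_nonneg (by linarith),
        abs_of_nonneg (by linarith)]
      ring
  | succ n ih =>
    rw [walkAbs, ih, ih, walkAbs, walkHit]
    ring

lemma walkHit_eq_zero (n : ℕ) (s : ℤ) (h : s < -n) : walkHit n s = 0 := by
  induction n generalizing s with
  | zero => simp only [walkHit]; rw [if_neg]; push_cast at h; omega
  | succ n ih =>
    push_cast at h
    rw [walkHit, ih _ (by omega), ih _ (by omega)]
    norm_num

lemma walkHit_eq_choose (n j : ℕ) : walkHit n (2 * j - n) = (n.choose j : ℝ) / 2 ^ n := by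
  induction n generalizing j with
  | zero =>
    rcases j with _ | j
    · simp [walkHit]
    · simp only [walkHit]
      rw [if_neg (by push_cast; omega)]
      simp
  | succ n ih =>
    rw [walkHit]
    have e1 : (2 * (j : ℤ) - (n + 1 : ℕ) + 1) = 2 * j - n := by push_cast; ring
    rw [e1, ih]
    rcases j with _ | j
    · rw [walkHit_eq_zero n _ (by push_cast; omega)]
      simp [pow_succ]
      ring
    · have e2 : (2 * ((j + 1 : ℕ) : ℤ) - (n + 1 : ℕ) - 1) = 2 * j - n := by push_cast; ring
      rw [e2, ih, Nat.choose_succ_succ]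
      push_cast
      rw [pow_succ]
      ring

lemma walkHit_even (m : ℕ) : walkHit (2 * m) 0 = (m.centralBinom : ℝ) / 4 ^ m := by
  have h := walkHit_eq_choose (2 * m) m
  have e : (2 * (m : ℤ) - (2 * m : ℕ)) = 0 := by push_cast; ring
  rw [e] at h
  rw [h, Nat.centralBinom, pow_mul]
  norm_num

lemma walkHit_even_succ (m : ℕ) :
    (2 * m + 2 : ℝ) * walkHit (2 * (m + 1)) 0 = (2 * m + 1) * walkHit (2 * m) 0 := by
  rw [walkHit_even, walkHit_even]
  have h : ((m : ℝ) + 1) * (m + 1).centralBinom = 2 * (2 * m + 1) * m.centralBinom := by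
    exact_mod_cast Nat.succ_mul_centralBinom_succ m
  rw [pow_succ]
  field_simp
  linarith

lemma walkAbs_odd (m : ℕ) : (2 * m + 1 : ℝ) * walkHit (2 * m) 0 ≤ walkAbs (2 * m + 1) 0 := by
  induction m with
  | zero => simp [walkAbs, walkHit]
  | succ m ih =>
    have h1 : walkAbs (2 * (m + 1) + 1) 0 = walkAbs (2 * m + 1) 0 + walkHit (2 * m + 1) 0
        + walkHit (2 * (m + 1)) 0 := by
      rw [walkAbs_succ, show 2 * (m + 1) = 2 * m + 1 + 1 by ring, walkAbs_succ]
    have h2 := walkHit_nonneg (2 * m + 1) 0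
    have h3 := walkHit_even_succ m
    rw [h1]
    push_cast
    linarith

lemma one_le_walkHit_sq (m : ℕ) :
    1 ≤ 4 * ((m : ℝ) + 1) * walkHit (2 * (m + 1)) 0 ^ 2 := by
  induction m with
  | zero => rw [walkHit_even]; norm_num [Nat.centralBinom]
  | succ m ih =>
    have h := walkHit_even_succ (m + 1)
    push_cast at h ⊢
    set a := walkHit (2 * (m + 1)) 0
    set b := walkHit (2 * (m + 1 + 1)) 0
    have hm : (0 : ℝ) ≤ m := m.cast_nonneg
    have hb : b = (2 * m + 3) * a / (2 * m + 4) := by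
      field_simp
      linarith
    refine ih.trans ?_
    rw [hb, div_pow, mul_pow]
    have : 4 * ((m : ℝ) + 1 + 1) * ((2 * m + 3) ^ 2 * a ^ 2 / (2 * m + 4) ^ 2)
        = (2 * m + 3) ^ 2 / (m + 2) * a ^ 2 := by
      field_simp
      ring
    rw [this]
    gcongr
    rw [le_div_iff₀ (by positivity)]
    nlinarith

/-- Khinchine's inequality `𝔼|S_k| ≥ √(k/2)` for `k` odd. -/
lemma sqrt_le_walkAbs (k : ℕ) (hk : Odd k) : Real.sqrt ((k : ℝ) / 2) ≤ walkAbs k 0 := by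
  obtain ⟨m, rfl⟩ := hk
  have hpos := walkHit_nonneg (2 * m) 0
  refine le_trans ?_ (walkAbs_odd m)
  apply Real.sqrt_le_iff.mpr
  refine ⟨by positivity, ?_⟩
  rcases m with _ | m
  · simp [walkHit]; norm_num
  · have h := one_le_walkHit_sq m
    push_cast
    rw [mul_pow]
    set a := walkHit (2 * (m + 1)) 0
    have hm : (0 : ℝ) ≤ m := m.cast_nonneg
    -- `4 (m+1) a² ≥ 1` makes `(2(m+1)+1) a²` at least `1/2`.
    have h2 : 1 / 2 ≤ (2 * ((m : ℝ) + 1) + 1) * a ^ 2 := by nlinarith [sq_nonneg a]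
    nlinarith

/-! ### Splitting the tree at its root -/

/-- The set labels at the root are disjoint, and each of the two subclasses consistent with a
root edge shatters the subtree below that edge. -/
lemma PSLShatter.succ {X Y : Type*} {𝒮 : Set (Set Y)} {H : Set (X → Y)} {d : ℕ}
    (h : PSLShatter 𝒮 H 2 (d + 1)) :
    ∃ (x : X) (S : Fin 2 → Set Y), (∀ i, S i ∈ 𝒮) ∧ S 0 ∩ S 1 = ∅ ∧
      ∀ i, PSLShatter 𝒮 {h ∈ H | h x ∈ S i} 2 d := by
  obtain ⟨node, edge, hmem, hpath⟩ := h
  have hpref : ∀ (i : Fin 2) (q : Fin d → Fin 2) (t : Fin d),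
      pref (Fin.cons i q : Fin (d + 1) → Fin 2) t.succ = (Fin.cons i (pref q t) :
        Fin ((t : ℕ) + 1) → Fin 2) := by
    intro i q t
    funext j
    refine Fin.cases ?_ (fun j => ?_) j <;> rfl
  have hprefS : ∀ (i : Fin 2) (q : Fin d → Fin 2) (t : Fin d),
      prefS (Fin.cons i q : Fin (d + 1) → Fin 2) t.succ = (Fin.cons i (prefS q t) :
        Fin ((t : ℕ) + 1 + 1) → Fin 2) := by
    intro i q t
    funext j
    refine Fin.cases ?_ (fun j => ?_) j <;> rfl
  refine ⟨node 0 Fin.elim0, fun i => edge 0 (fun _ => i), fun i => hmem _ _, ?_, fun i => ?_⟩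
  · have h0 := (hpath (fun _ => 0)).1 0
    have e : ∀ i : Fin 2, (Fin.snoc (pref (fun _ : Fin (d + 1) => (0 : Fin 2)) 0) i :
        Fin (((0 : Fin (d + 1)) : ℕ) + 1) → Fin 2) = fun _ => i := by
      intro i
      funext j
      have hj : j = Fin.last _ := Subsingleton.elim (α := Fin 1) _ _
      rw [hj]
      exact Fin.snoc_last _ _
    simp only [e] at h0
    rw [← h0]
    ext y
    simp [Fin.forall_fin_two]
  · refine ⟨fun t q => node t.succ (Fin.cons i q : Fin ((t : ℕ) + 1) → Fin 2),
      fun t q => edge t.succ (Fin.cons i q : Fin ((t : ℕ) + 1 + 1) → Fin 2),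
      fun t q => hmem _ _, fun q => ?_⟩
    obtain ⟨hdisj, g, hg, hgc⟩ := hpath (Fin.cons i q)
    refine ⟨fun t => ?_, g, ⟨hg, ?_⟩, fun t => ?_⟩
    · have h1 := hdisj t.succ
      rw [hpref] at h1
      rw [← h1]
      congr 1
      funext j
      exact congrArg (edge t.succ) (Fin.cons_snoc_eq_snoc_cons _ _ _)
    · have h1 := hgc 0
      have e1 : pref (Fin.cons i q : Fin (d + 1) → Fin 2) 0 = Fin.elim0 := by
        funext j; exact j.elim0
      have e2 : prefS (Fin.cons i q : Fin (d + 1) → Fin 2) 0 = fun _ => i := by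
        funext j
        have hj : j = 0 := Subsingleton.elim (α := Fin 1) _ _
        rw [hj]; rfl
      rwa [e1, e2] at h1
    · have h1 := hgc t.succ
      rwa [hpref, hprefS] at h1

/-! ### The adversary -/

/-- Expected loss of the learner `A` on the rounds `M`, played after the history `L`. -/
noncomputable def learnerCost {X Y : Type*} [MeasurableSpace Y]
    (A : List (X × Set Y) → X → ProbabilityMeasure Y) :
    List (X × Set Y) → List (X × Set Y) → ℝ
  | _, [] => 0
  | L, p :: M => ((A L p.1).toMeasure (p.2)ᶜ).toReal + learnerCost A (L ++ [p]) M

open scoped Classical in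
/-- Number of rounds in `M` on which `h` errs. -/
noncomputable def errCount {X Y : Type*} (h : X → Y) : List (X × Set Y) → ℝ
  | [] => 0
  | p :: M => (if h p.1 ∉ p.2 then 1 else 0) + errCount h M

lemma errCount_append {X Y : Type*} (h : X → Y) (M N : List (X × Set Y)) :
    errCount h (M ++ N) = errCount h M + errCount h N := by
  induction M with
  | nil => simp [errCount]
  | cons p M ih => simp only [List.cons_append, errCount, ih]; ring

lemma learnerCost_append {X Y : Type*} [MeasurableSpace Y]
    (A : List (X × Set Y) → X → ProbabilityMeasure Y) (L M N : List (X × Set Y)) :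
    learnerCost A L (M ++ N) = learnerCost A L M + learnerCost A (L ++ M) N := by
  induction M generalizing L with
  | nil => simp [learnerCost]
  | cons p M ih =>
    simp only [List.cons_append, learnerCost, ih, List.append_assoc]
    simp [add_assoc]

/-- Any prediction loses at least `1` in total against two disjoint sets. -/
lemma one_le_compl_add_compl {Y : Type*} [MeasurableSpace Y] (μ : ProbabilityMeasure Y)
    {S S' : Set Y} (h : S ∩ S' = ∅) :
    1 ≤ (μ.toMeasure Sᶜ).toReal + (μ.toMeasure S'ᶜ).toReal := by
  have hu : Sᶜ ∪ S'ᶜ = Set.univ := by rw [← Set.compl_inter, h, Set.compl_empty]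
  have h1 := measureReal_union_le (μ := μ.toMeasure) Sᶜ S'ᶜ
  rw [hu] at h1
  simpa [Measure.real] using h1

/-- One block of `n` rounds at the instance `x`, started with the imbalance `s`. The numbers `c₀`
and `c₁` count the uses of `S 0` and `S 1`; the learner's cost exceeds `n / 2` by half the
expected final imbalance `walkAbs n s` minus half the actual one. -/
lemma exists_block {X Y : Type*} [MeasurableSpace Y]
    (A : List (X × Set Y) → X → ProbabilityMeasure Y) {𝒮 : Set (Set Y)} (x : X)
    (S : Fin 2 → Set Y) (hS : ∀ i, S i ∈ 𝒮) (hdisj : S 0 ∩ S 1 = ∅) (n : ℕ) (s : ℤ)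
    (L : List (X × Set Y)) :
    ∃ (M : List (X × Set Y)) (c₀ c₁ : ℕ), M.length = n ∧ c₀ + c₁ = n ∧ (∀ p ∈ M, p.2 ∈ 𝒮) ∧
      (∀ h : X → Y, h x ∈ S 0 → errCount h M ≤ c₁) ∧
      (∀ h : X → Y, h x ∈ S 1 → errCount h M ≤ c₀) ∧
      (n : ℝ) / 2 + walkAbs n s / 2 - |(s : ℝ) + c₀ - c₁| / 2 ≤ learnerCost A L M := by
  induction n generalizing s L with
  | zero => exact ⟨[], 0, 0, rfl, rfl, by simp, by simp [errCount], by simp [errCount],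
      by simp [learnerCost, walkAbs]⟩
  | succ n ih =>
    have hsum := one_le_compl_add_compl (A L x) hdisj
    have hw : walkAbs (n + 1) s = (walkAbs n (s + 1) + walkAbs n (s - 1)) / 2 := rfl
    -- One of the two choices does not decrease the potential, since it does not on average.
    by_cases hc : 1 / 2 + walkAbs (n + 1) s / 2 - walkAbs n (s + 1) / 2
        ≤ ((A L x).toMeasure (S 0)ᶜ).toReal
    · obtain ⟨M, c₀, c₁, hlen, hcc, hmem, h0, h1, hcost⟩ := ih (s + 1) (L ++ [(x, S 0)])
      refine ⟨(x, S 0) :: M, c₀ + 1, c₁, by simp [hlen], by omega, ?_, ?_, ?_, ?_⟩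
      · intro p hp
        rcases List.mem_cons.mp hp with rfl | hp
        exacts [hS 0, hmem p hp]
      · intro h hh
        have := h0 h hh
        simp only [errCount, hh, not_true_eq_false, if_false]
        linarith
      · intro h hh
        have := h1 h hh
        simp only [errCount]
        push_cast
        split_ifs <;> linarith
      · simp only [learnerCost]
        push_cast at hcost ⊢
        rw [show (s : ℝ) + 1 + c₀ - c₁ = s + (c₀ + 1) - c₁ by ring] at hcost
        linarith
    · obtain ⟨M, c₀, c₁, hlen, hcc, hmem, h0, h1, hcost⟩ := ih (s - 1) (L ++ [(x, S 1)])
      refine ⟨(x, S 1) :: M, c₀, c₁ + 1, by simp [hlen], by omega, ?_, ?_, ?_, ?_⟩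
      · intro p hp
        rcases List.mem_cons.mp hp with rfl | hp
        exacts [hS 1, hmem p hp]
      · intro h hh
        have := h0 h hh
        simp only [errCount]
        push_cast
        split_ifs <;> linarith
      · intro h hh
        have := h1 h hh
        simp only [errCount, hh, not_true_eq_false, if_false]
        linarith
      · simp only [learnerCost]
        push_cast at hcost ⊢
        rw [show (s : ℝ) - 1 + c₀ - c₁ = s + c₀ - (c₁ + 1) by ring] at hcost
        linarith

/-- Playing one block of `k` rounds at each node and descending along the majority edge forces
regret `walkAbs k 0 / 2` per level of the tree, whatever history `L` came before. -/
lemma exists_list {X Y : Type*} [MeasurableSpace Y]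
    (A : List (X × Set Y) → X → ProbabilityMeasure Y) {𝒮 : Set (Set Y)} (k d : ℕ)
    (H : Set (X → Y)) (hH : PSLShatter 𝒮 H 2 d) (L : List (X × Set Y)) :
    ∃ M : List (X × Set Y), M.length = k * d ∧ (∀ p ∈ M, p.2 ∈ 𝒮) ∧
      ∃ h ∈ H, d * (walkAbs k 0 / 2) ≤ learnerCost A L M - errCount h M := by
  induction d generalizing H L with
  | zero =>
    obtain ⟨node, edge, -, hp⟩ := hH
    obtain ⟨-, h, hh, -⟩ := hp Fin.elim0
    exact ⟨[], rfl, by simp, h, hh, by simp [learnerCost, errCount]⟩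
  | succ d ih =>
    obtain ⟨x, S, hS, hdisj, hsub⟩ := hH.succ
    obtain ⟨M, c₀, c₁, hlen, hcc, hmem, h0, h1, hcost⟩ := exists_block A x S hS hdisj k 0 L
    have hcc' : (c₀ : ℝ) + c₁ = k := by exact_mod_cast hcc
    -- Descend along the majority edge `i`: the surviving hypotheses err at most
    -- `min c₀ c₁ = (k - |c₀ - c₁|) / 2` times in this block.
    obtain ⟨i, hi⟩ : ∃ i, ∀ h : X → Y, h x ∈ S i →
        errCount h M ≤ (k : ℝ) / 2 - |((0 : ℤ) : ℝ) + c₀ - c₁| / 2 := by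
      rcases le_total (c₁ : ℝ) c₀ with hle | hle
      · refine ⟨0, fun h hh => (h0 h hh).trans ?_⟩
        push_cast
        rw [abs_of_nonneg (by linarith)]
        linarith
      · refine ⟨1, fun h hh => (h1 h hh).trans ?_⟩
        push_cast
        rw [abs_of_nonpos (by linarith)]
        linarith
    obtain ⟨N, hNlen, hNmem, h, ⟨hh, hhx⟩, hreg⟩ := ih _ (hsub i) (L ++ M)
    refine ⟨M ++ N, by simp [hlen, hNlen]; ring, ?_, h, hh, ?_⟩
    · intro p hp
      rcases List.mem_append.mp hp with hp | hp
      exacts [hmem p hp, hNmem p hp]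
    · have := hi h hhx
      rw [learnerCost_append, errCount_append]
      push_cast
      linarith

/-! ### From lists to streams -/

lemma learnerCost_eq_sum {X Y : Type*} [MeasurableSpace Y]
    (A : List (X × Set Y) → X → ProbabilityMeasure Y) (p₀ : X × Set Y)
    (L M : List (X × Set Y)) :
    learnerCost A L M = ∑ t ∈ Finset.range M.length,
      ((A (L ++ M.take t) (M.getD t p₀).1).toMeasure ((M.getD t p₀).2)ᶜ).toReal := by
  induction M generalizing L with
  | nil => simp [learnerCost]
  | cons p M ih =>
    rw [List.length_cons, Finset.sum_range_succ', learnerCost, ih, add_comm]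
    simp

open scoped Classical in
lemma errCount_eq_sum {X Y : Type*} (h : X → Y) (p₀ : X × Set Y) (M : List (X × Set Y)) :
    errCount h M = ∑ t ∈ Finset.range M.length,
      if h (M.getD t p₀).1 ∉ (M.getD t p₀).2 then (1 : ℝ) else 0 := by
  induction M with
  | nil => simp [errCount]
  | cons p M ih =>
    rw [List.length_cons, Finset.sum_range_succ', errCount, ih, add_comm]
    simp

lemma hist_getD {X Y : Type*} (p₀ : X × Set Y) (M : List (X × Set Y)) (t : ℕ)
    (ht : t ≤ M.length) :
    hist (fun i => (M.getD i p₀).1) (fun i => (M.getD i p₀).2) t = M.take t := by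
  unfold hist
  apply List.ext_getElem
  · simp [ht]
  · intro i h1 h2
    have : i < M.length := by simp at h2; omega
    simp [this]

open scoped Classical in
/-- If `ℋ` shatters a 2-Set Littlestone tree of depth `d ≥ 1` and `T = k·d`
with `k` odd, then every randomized online learner suffers expected regret at least
`√(dT/8)` on some stream of length `T` (regret is witnessed by some `h ∈ ℋ`, which is the
best-in-hindsight hypothesis up to attainment of the infimum). -/
theorem stmt8 {X Y : Type*} [MeasurableSpace Y]
    (𝒮 : Set (Set Y)) (h𝒮 : ∀ s ∈ 𝒮, MeasurableSet s)
    (H : Set (X → Y)) (d k : ℕ) (hd : 1 ≤ d) (hk : Odd k)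
    (hshat : PSLShatter 𝒮 H 2 d)
    (A : List (X × Set Y) → X → ProbabilityMeasure Y) :
    ∃ (x : ℕ → X) (S : ℕ → Set Y),
      (∀ t < k * d, S t ∈ 𝒮) ∧
      ∃ h ∈ H,
        Real.sqrt ((d : ℝ) * (k * d) / 8) ≤
          (∑ t ∈ Finset.range (k * d), (A (hist x S t) (x t)).toMeasure ((S t)ᶜ)).toReal -
            (((Finset.range (k * d)).filter fun t => h (x t) ∉ S t).card : ℝ) := by
  obtain ⟨M, hlen, hmem, h, hh, hreg⟩ := exists_list A k d H hshat []
  have x₀ : X := hshat.choose ⟨0, hd⟩ Fin.elim0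
  let p₀ : X × Set Y := (x₀, ∅)
  refine ⟨fun i => (M.getD i p₀).1, fun i => (M.getD i p₀).2, ?_, h, hh, ?_⟩
  · intro t ht
    rw [← hlen] at ht
    have e : M.getD t p₀ = M[t] := by simp [ht]
    simp only [e]
    exact hmem _ (List.getElem_mem ht)
  · have hsum : (∑ t ∈ Finset.range (k * d), (A (hist (fun i => (M.getD i p₀).1)
        (fun i => (M.getD i p₀).2) t) (M.getD t p₀).1).toMeasure
          ((M.getD t p₀).2)ᶜ).toReal = learnerCost A [] M := by
      rw [ENNReal.toReal_sum (fun t _ => measure_ne_top _ _), learnerCost_eq_sum A p₀, hlen]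
      refine Finset.sum_congr rfl fun t ht => ?_
      rw [hist_getD p₀ M t (by rw [hlen]; exact (Finset.mem_range.mp ht).le), List.nil_append]
    have herr : (((Finset.range (k * d)).filter fun t =>
        h (M.getD t p₀).1 ∉ (M.getD t p₀).2).card : ℝ) = errCount h M := by
      rw [errCount_eq_sum h p₀, hlen, Finset.sum_boole]
    rw [hsum, herr]
    refine le_trans ?_ hreg
    have hw := sqrt_le_walkAbs k hk
    have e : (d : ℝ) * (k * d) / 8 = (d / 2 : ℝ) ^ 2 * (k / 2) := by ring
    rw [e, Real.sqrt_mul (sq_nonneg _), Real.sqrt_sq (by positivity)]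
    have hd0 : (0 : ℝ) ≤ d / 2 := by positivity
    have := mul_le_mul_of_nonneg_left hw hd0
    linarith
end

section
/- Let (𝒴, σ(𝒴)) be a measurable space, 𝒮(𝒴) ⊆ σ(𝒴), 𝒳 a set, and ℋ ⊆ 𝒴^𝒳. Let p ≥ 2 and γ ∈ [0, 1/p]. If ℋ shatters a p-Set Littlestone tree of depth d, then ℋ γ-shatters a measure tree of depth d. -/
/-!
At a node of a `p`-Set Littlestone tree the `p` outgoing edge sets have empty intersection, so
their complements cover `Y` and, for every probability measure `m`, some edge set has `m`-measure
at most `1 - 1 / p` (`exists_measure_le`). Always following such an edge turns every path of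
measures into a path in `[p]` (`convertPath`). As this is done causally, it commutes with taking
prefixes (`convertPath_castLE`), and the labels of the given tree read along the converted paths
form the measure tree; the bound `1 - 1 / p` is at most `1 - γ`, and is `< 1` when `γ = 0`.
-/

open MeasureTheory

/-- The path obtained by feeding the entries of `ms` one at a time to the selection rule `c`:
the `n`-th entry is chosen by `c n` from the path built so far and the `n`-th entry of `ms`. -/
def convertPath {M Q : Type*} (c : ∀ n : ℕ, (Fin n → Q) → M → Q) :
    ∀ n : ℕ, (Fin n → M) → (Fin n → Q)
  | 0, _ => Fin.elim0
  | n + 1, ms =>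
    Fin.snoc (convertPath c n (Fin.init ms))
      (c n (convertPath c n (Fin.init ms)) (ms (Fin.last n)))

/-- Converting a path commutes with taking prefixes, so the converted path up to a given time
depends only on the entries of the original path up to that time. -/
lemma convertPath_castLE {M Q : Type*} (c : ∀ n : ℕ, (Fin n → Q) → M → Q) (d : ℕ)
    (ms : Fin d → M) (n : ℕ) (hn : n ≤ d) :
    (fun i : Fin n => convertPath c d ms (Fin.castLE hn i)) =
      convertPath c n (fun i => ms (Fin.castLE hn i)) := by
  induction d with
  | zero =>
    obtain rfl : n = 0 := by omega
    rfl
  | succ d ih =>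
    rcases Nat.lt_or_ge d n with h | h
    · obtain rfl : n = d + 1 := by omega
      rfl
    · rw [show (fun i : Fin n => ms (Fin.castLE hn i)) =
        fun i : Fin n => Fin.init ms (Fin.castLE h i) from rfl, ← ih (Fin.init ms) h]
      funext i
      rw [show Fin.castLE hn i = Fin.castSucc (Fin.castLE h i) from rfl, convertPath,
        Fin.snoc_castSucc]

/-- The complements of `p` sets with empty intersection cover the space, so one of them has
probability at least `1 / p`. -/
lemma exists_measure_le {Y : Type*} [MeasurableSpace Y] {p : ℕ} (hp : 2 ≤ p)
    (m : ProbabilityMeasure Y) (e : Fin p → Set Y) (he : ∀ i, MeasurableSet (e i))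
    (hempty : ⋂ i, e i = ∅) :
    ∃ i, m.toMeasure (e i) ≤ 1 - (p : ENNReal)⁻¹ := by
  have hp0 : (p : ENNReal) ≠ 0 := by
    simp only [ne_eq, Nat.cast_eq_zero]
    omega
  by_contra! hlt
  have hsmall : ∀ i, m.toMeasure (e i)ᶜ < (p : ENNReal)⁻¹ := fun i => by
    rw [prob_compl_eq_one_sub (he i)]
    exact ENNReal.sub_lt_of_sub_lt prob_le_one (Or.inl ENNReal.one_ne_top) (hlt i)
  have hcover : (1 : ENNReal) ≤ ∑ i, m.toMeasure (e i)ᶜ := by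
    calc (1 : ENNReal) = m.toMeasure (⋃ i, (e i)ᶜ) := by
          rw [← Set.compl_iInter, hempty, Set.compl_empty, measure_univ]
      _ ≤ ∑ i, m.toMeasure (e i)ᶜ := measure_iUnion_fintype_le _ _
  have hsum : ∑ i, m.toMeasure (e i)ᶜ < ∑ _i : Fin p, (p : ENNReal)⁻¹ :=
    ENNReal.sum_lt_sum_of_nonempty ⟨⟨0, by omega⟩, Finset.mem_univ _⟩ fun i _ => hsmall i
  rw [Finset.sum_const, Finset.card_univ, Fintype.card_fin, nsmul_eq_mul,
    ENNReal.mul_inv_cancel hp0 (ENNReal.natCast_ne_top p)] at hsum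
  exact absurd hcover (not_le.2 hsum)

/-- For `p ≥ 2` and `γ ∈ [0, 1/p]`, if `ℋ` shatters a `p`-Set Littlestone
tree of depth `d`, then `ℋ` `γ`-shatters a measure tree of depth `d`. -/
theorem stmt9 {X Y : Type*} [MeasurableSpace Y]
    (𝒮 : Set (Set Y)) (h𝒮 : ∀ s ∈ 𝒮, MeasurableSet s)
    (H : Set (X → Y)) (p : ℕ) (hp : 2 ≤ p)
    (γ : ℝ) (hγ0 : 0 ≤ γ) (hγ1 : γ ≤ 1 / p) (d : ℕ)
    (hshat : PSLShatter 𝒮 H p d) :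
    MSShatter 𝒮 H γ d := by
  obtain ⟨node, edge, hS, hq⟩ := hshat
  have hchoice : ∀ (n : ℕ) (qs : Fin n → Fin p) (m : ProbabilityMeasure Y), ∃ i : Fin p,
      ∀ hn : n < d, m.toMeasure (edge ⟨n, hn⟩ (Fin.snoc qs i)) ≤ 1 - (p : ENNReal)⁻¹ := by
    intro n qs m
    by_cases hn : n < d
    · -- The empty-intersection condition speaks of full paths, so `qs` is padded to length `d`.
      let q : Fin d → Fin p := fun j => if hj : (j : ℕ) < n then qs ⟨j, hj⟩ else ⟨0, by omega⟩
      have hpref : pref q ⟨n, hn⟩ = qs := by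
        funext i
        simp [pref, q]
      have hempty := (hq q).1 ⟨n, hn⟩
      rw [hpref] at hempty
      obtain ⟨i, hi⟩ := exists_measure_le hp m _ (fun i => h𝒮 _ (hS _ _)) hempty
      exact ⟨i, fun _ => hi⟩
    · exact ⟨⟨0, by omega⟩, fun h => absurd h hn⟩
  choose c hc using hchoice
  refine ⟨fun t ms => node t (convertPath c t ms),
    fun t ms => edge t (convertPath c (t + 1) ms), fun t ms => hS _ _, fun μ => ⟨fun t => ?_, ?_⟩⟩
  · have hle : (μ t).toMeasure (edge t (convertPath c (t + 1) (prefS μ t))) ≤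
        1 - (p : ENNReal)⁻¹ := hc t (convertPath c t (pref μ t)) (μ t) t.isLt
    split_ifs with h0
    · exact hle.trans_lt (ENNReal.sub_lt_self ENNReal.one_ne_top one_ne_zero
        (ENNReal.inv_ne_zero.2 (ENNReal.natCast_ne_top p)))
    · refine hle.trans (tsub_le_tsub_left ?_ 1)
      have hp0 : (0 : ℝ) < p := by exact_mod_cast (by omega : 0 < p)
      calc ENNReal.ofReal γ ≤ ENNReal.ofReal (p : ℝ)⁻¹ :=
            ENNReal.ofReal_le_ofReal (by rwa [← one_div])
        _ = (p : ENNReal)⁻¹ := by rw [ENNReal.ofReal_inv_of_pos hp0, ENNReal.ofReal_natCast]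
  · obtain ⟨h, hH, hh⟩ := (hq (convertPath c d μ)).2
    refine ⟨h, hH, fun t => ?_⟩
    have h1 : pref (convertPath c d μ) t = convertPath c t (pref μ t) :=
      convertPath_castLE c d μ t t.isLt.le
    have h2 : prefS (convertPath c d μ) t = convertPath c (t + 1) (prefS μ t) :=
      convertPath_castLE c d μ (t + 1) t.isLt
    have ht := hh t
    rwa [h1, h2] at ht
end

section
/- Let (𝒴, σ(𝒴)) be a measurable space in which every singleton {y} is measurable, let 𝒮(𝒴) ⊆ σ(𝒴), 𝒳 a set, and ℋ ⊆ 𝒴^𝒳. Let γ ∈ [0,1]. If ℋ γ-shatters a measure tree of depth d, then ℋ shatters a Set Littlestone tree of depth d. -/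
open MeasureTheory

/-- If singletons of `𝒴` are measurable and `γ ∈ [0,1]`, then `γ`-shattering
of a measure tree of depth `d` by `ℋ` implies shattering of a Set Littlestone tree of
depth `d` by `ℋ`. -/
theorem stmt10 {X Y : Type*} [MeasurableSpace Y] [MeasurableSingletonClass Y]
    (𝒮 : Set (Set Y)) (h𝒮 : ∀ s ∈ 𝒮, MeasurableSet s)
    (H : Set (X → Y))
    (γ : ℝ) (hγ0 : 0 ≤ γ) (hγ1 : γ ≤ 1) (d : ℕ)
    (hshat : MSShatter 𝒮 H γ d) :
    SLShatter 𝒮 H d := by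
  -- Pull the measure tree back along `y ↦ δ_y`: a Dirac mass gives an edge set measure `1`
  -- as soon as the set contains its point, so a bound below `1` forces `y t ∉ edge t`.
  obtain ⟨node, edge, hedge, hpath⟩ := hshat
  let δ : Y → ProbabilityMeasure Y := fun y => ⟨Measure.dirac y, inferInstance⟩
  refine ⟨fun t ys => node t (δ ∘ ys), fun t ys => edge t (δ ∘ ys), fun t ys => hedge t _,
    fun y => ?_⟩
  obtain ⟨hsmall, hcons⟩ := hpath (δ ∘ y)
  refine ⟨fun t hmem => ?_, hcons⟩
  have hone : (δ (y t)).toMeasure (edge t (prefS (δ ∘ y) t)) = 1 :=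
    Measure.dirac_apply_of_mem hmem
  have ht := hsmall t
  rw [Function.comp_apply, hone] at ht
  split_ifs at ht with hγ
  · exact lt_irrefl _ ht
  · have hpos : 0 < ENNReal.ofReal γ := ENNReal.ofReal_pos.2 (lt_of_le_of_ne hγ0 (Ne.symm hγ))
    exact absurd ht (not_le.2 (ENNReal.sub_lt_self ENNReal.one_ne_top one_ne_zero hpos.ne'))
end

section
/- Let (𝒴, σ(𝒴)) be a measurable space, 𝒮(𝒴) ⊆ σ(𝒴), 𝒳 a set, and ℋ ⊆ 𝒴^𝒳. Suppose the Helly number of 𝒮(𝒴) is finite and equals p. If ℋ shatters a Set Littlestone tree of depth d, then ℋ shatters a p-Set Littlestone tree of depth d. -/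
/-!
At any node of a Set Littlestone tree, the edge labels, indexed by `y ∈ Y`, have empty
intersection, because `y` is missing from its own edge. The Helly property selects `p` of
these edges that already intersect in the empty set (`exists_children`). Keeping only the
selected children at every node turns a path `q ∈ [p]^d` into a path `liftPath g q ∈ Y^d` of
the original tree, compatibly with prefixes (`liftPath_castLE`), so the labels and the
consistent hypotheses of the original tree carry over.

The selection needs `Y` nonempty, which minimality of `p` guarantees when `p > 0`. When `p = 0`
and `d > 0` there are no paths `q` at all; when `d = 0` both notions say that `H` is nonempty.
-/

open MeasureTheory

/-- `𝒮` has the Helly property at `p`: every subcollection of `𝒮` with empty intersection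
contains a subcollection of size at most `p` with empty intersection. The Helly number of
`𝒮` is the smallest such `p`. -/
def HellyAt {Y : Type*} (𝒮 : Set (Set Y)) (p : ℕ) : Prop :=
  ∀ C ⊆ 𝒮, ⋂₀ C = ∅ → ∃ C' ⊆ C, C'.Finite ∧ C'.ncard ≤ p ∧ ⋂₀ C' = ∅

/-- The path in `Y` obtained from a path of indices in `Fin p`, where `g n ys i` is the `i`-th
selected child of the node reached by `ys`. -/
def liftPath {Y : Type*} {p : ℕ} (g : ∀ n : ℕ, (Fin n → Y) → Fin p → Y) :
    ∀ {n : ℕ}, (Fin n → Fin p) → Fin n → Y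
  | 0, _ => Fin.elim0
  | n + 1, q =>
    Fin.snoc (α := fun _ => Y) (liftPath g (Fin.init q))
      (g n (liftPath g (Fin.init q)) (q (Fin.last n)))

theorem liftPath_castLE {Y : Type*} {p : ℕ} (g : ∀ n : ℕ, (Fin n → Y) → Fin p → Y)
    {m n : ℕ} (hmn : m ≤ n) (q : Fin n → Fin p) (i : Fin m) :
    liftPath g q (Fin.castLE hmn i) = liftPath g (fun j => q (Fin.castLE hmn j)) i := by
  induction n with
  | zero => exact absurd i.isLt (by omega)
  | succ n ih =>
    rcases Nat.lt_or_ge n m with h | h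
    · obtain rfl : m = n + 1 := by omega
      rfl
    · have e : Fin.castLE hmn i = Fin.castSucc (Fin.castLE h i) := rfl
      rw [e, liftPath, Fin.snoc_castSucc, ih h]
      rfl

theorem liftPath_snoc {Y : Type*} {p : ℕ} (g : ∀ n : ℕ, (Fin n → Y) → Fin p → Y)
    {n : ℕ} (q : Fin n → Fin p) (i : Fin p) :
    liftPath g (Fin.snoc (α := fun _ => Fin p) q i) =
      Fin.snoc (α := fun _ => Y) (liftPath g q) (g n (liftPath g q) i) := by
  simp [liftPath]

/-- A family of sets from `𝒮` with empty intersection has `p` members, possibly repeated, with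
empty intersection. Nonemptiness of `Y` ensures that
the subcollection given by `HellyAt` is nonempty, so a shorter list can be padded. -/
theorem exists_children {Y : Type*} [Nonempty Y] {𝒮 : Set (Set Y)} {p : ℕ}
    (hHelly : HellyAt 𝒮 p) (E : Y → Set Y) (hE : ∀ y, E y ∈ 𝒮)
    (hempty : ⋂ y, E y = ∅) : ∃ c : Fin p → Y, ⋂ i, E (c i) = ∅ := by
  obtain ⟨C', hC', hfin, hcard, hint⟩ := hHelly (Set.range E)
    (by rintro _ ⟨y, rfl⟩; exact hE y) (by rw [Set.sInter_range]; exact hempty)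
  have hne : C'.Nonempty := by
    rw [Set.nonempty_iff_ne_empty]
    rintro rfl
    simp at hint
  have : Nonempty C' := hne.to_subtype
  have : Fintype C' := hfin.fintype
  have hle : Fintype.card C' ≤ Fintype.card (Fin p) := by
    rw [Fintype.card_fin, ← Nat.card_eq_fintype_card]
    exact hcard
  obtain ⟨e⟩ := Function.Embedding.nonempty_of_card_le hle
  choose r hr using fun s : C' => hC' s.2
  refine ⟨fun i => r (Function.invFun e i), ?_⟩
  rw [Set.eq_empty_iff_forall_notMem] at hint ⊢
  intro y hy
  refine hint y fun s hs => ?_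
  have := Set.mem_iInter.1 hy (e ⟨s, hs⟩)
  rwa [hr, Function.leftInverse_invFun e.injective] at this

/-- If the Helly number of `𝒮(𝒴)` is finite and equals `p`, then shattering
of a Set Littlestone tree of depth `d` by `ℋ` implies shattering of a `p`-Set Littlestone
tree of depth `d` by `ℋ`. -/
theorem stmt11 {X Y : Type*} [MeasurableSpace Y]
    (𝒮 : Set (Set Y)) (h𝒮 : ∀ s ∈ 𝒮, MeasurableSet s)
    (H : Set (X → Y)) (p : ℕ)
    (hHelly : HellyAt 𝒮 p) (hmin : ∀ q < p, ¬ HellyAt 𝒮 q)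
    (d : ℕ) (hshat : SLShatter 𝒮 H d) :
    PSLShatter 𝒮 H p d := by
  obtain ⟨node, edge, hedge, hpath⟩ := hshat
  rcases Nat.eq_zero_or_pos d with rfl | hd
  · obtain ⟨-, h, hH, -⟩ := hpath Fin.elim0
    exact ⟨fun t => t.elim0, fun t => t.elim0, fun t => t.elim0,
      fun _ => ⟨fun t => t.elim0, h, hH, fun t => t.elim0⟩⟩
  rcases Nat.eq_zero_or_pos p with rfl | hp
  · let x : X := node ⟨0, hd⟩ Fin.elim0
    exact ⟨fun _ _ => x, fun _ _ => ∅, fun t qs => (qs 0).elim0, fun q => (q ⟨0, hd⟩).elim0⟩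
  -- On an empty `Y` the empty subcollection already has empty intersection.
  have : Nonempty Y := by
    by_contra hY
    rw [not_nonempty_iff] at hY
    exact hmin 0 hp fun C _ _ =>
      ⟨∅, Set.empty_subset _, Set.finite_empty, by simp, Set.eq_empty_of_isEmpty _⟩
  have hnot : ∀ (t : Fin d) (ys : Fin (t : ℕ) → Y) (y : Y),
      y ∉ edge t (Fin.snoc (α := fun _ => Y) ys y) := by
    intro t ys y
    -- Extend the finite prefix `ys, y` to a full path of length `d`, constantly equal to `y`.
    let z : Fin d → Y := fun i => if h : (i : ℕ) < t then ys ⟨i, h⟩ else y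
    have hz : prefS z t = Fin.snoc (α := fun _ => Y) ys y := by
      funext i
      rfl
    have h := (hpath z).1 t
    rw [hz] at h
    simpa [z] using h
  have hsel : ∀ (n : ℕ) (ys : Fin n → Y), ∃ c : Fin p → Y, ∀ hn : n < d,
      ⋂ i, edge ⟨n, hn⟩ (Fin.snoc (α := fun _ => Y) ys (c i)) = ∅ := by
    intro n ys
    by_cases hn : n < d
    · obtain ⟨c, hc⟩ := exists_children hHelly
        (fun y => edge ⟨n, hn⟩ (Fin.snoc (α := fun _ => Y) ys y)) (fun y => hedge _ _)
        (Set.eq_empty_iff_forall_notMem.2 fun y hy =>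
          hnot ⟨n, hn⟩ ys y (Set.mem_iInter.1 hy y))
      exact ⟨c, fun _ => hc⟩
    · exact ⟨fun _ => Classical.arbitrary Y, fun h => absurd h hn⟩
  choose g hg using hsel
  refine ⟨fun t qs => node t (liftPath g qs), fun t qs => edge t (liftPath g qs),
    fun t qs => hedge _ _, fun q => ⟨fun t => ?_, ?_⟩⟩
  · have h := hg t (liftPath g (pref q t)) t.isLt
    simp only [liftPath_snoc]
    exact h
  · obtain ⟨h, hH, hh⟩ := (hpath (liftPath g q)).2
    refine ⟨h, hH, fun t => ?_⟩
    have h1 : pref (liftPath g q) t = liftPath g (pref q t) :=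
      funext fun i => liftPath_castLE g t.isLt.le q i
    have h2 : prefS (liftPath g q) t = liftPath g (prefS q t) :=
      funext fun i => liftPath_castLE g (Nat.succ_le_of_lt t.isLt) q i
    have h3 := hh t
    rw [h1, h2] at h3
    exact h3
end

section
/- Fix K ∈ ℕ with K ≥ 2. Let 𝒴 be the set of permutations of [K] and, for r ∈ {0,1}^K, let 𝒴(r) = {π ∈ 𝒴 : ℓ(π,r) = 0}, where ℓ is the 0-1 ranking loss. Then the Helly number of the collection {𝒴(r) : r ∈ {0,1}^K} equals 2. In particular: (i) for any Q ∈ ℕ and any r_1,…,r_Q ∈ {0,1}^K, if 𝒴(r_i) ∩ 𝒴(r_j) ≠ ∅ for all i,j ∈ [Q], then ⋂_{i=1}^Q 𝒴(r_i) ≠ ∅; and (ii) there exist r, r' ∈ {0,1}^K with 𝒴(r) ∩ 𝒴(r') = ∅. -/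
/-!
If `𝒴(r)` and `𝒴(s)` share a ranking, then the supports of `r` and `s` are nested: labels `i`, `j`
with `r i < r j` and `s j < s i` would force `π j < π i` and `π i < π j`. Hence a
pairwise-intersecting family comes from a chain of supports. Sorting the labels by the number of
vectors of the family that declare them irrelevant gives a ranking that is correct for the whole
chain (`exists_common_ranking`), so Helly's property holds at `2`. It fails below `2` because every
single `𝒴(r)` is nonempty, while the indicators of two distinct labels have disjoint `𝒴`-sets.
-/

/-- The set of correct rankings for a binary relevance vector `r`: a permutation `π` of
`[K]` (where `π i` is the rank of label `i`, smaller rank = more relevant) is correct iff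
whenever label `i` is irrelevant and label `j` is relevant, `j` is ranked above `i`. -/
def rankSet (K : ℕ) (r : Fin K → Bool) : Set (Equiv.Perm (Fin K)) :=
  {π | ∀ i j : Fin K, r i = false → r j = true → π j < π i}

/-- A family of relevance vectors no two of which order a pair of labels oppositely (equivalently,
whose supports form a chain) has a common correct ranking. -/
lemma exists_common_ranking {K : ℕ} (R : Set (Fin K → Bool))
    (hR : ∀ r ∈ R, ∀ s ∈ R, ∀ i j, r i = false → r j = true → s j = false → s i = false) :
    ∃ π : Equiv.Perm (Fin K), ∀ r ∈ R, π ∈ rankSet K r := by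
  classical
  -- The number of vectors of the family for which a label is irrelevant.
  let key : Fin K → ℕ := fun i => (Finset.univ.filter fun r => r ∈ R ∧ r i = false).card
  refine ⟨(Tuple.sort key).symm, fun r hr i j hi hj => ?_⟩
  have hlt : key j < key i := by
    apply Finset.card_lt_card
    rw [Finset.ssubset_iff_of_subset]
    · exact ⟨r, by simp [hr, hi], by simp [hj]⟩
    · intro s hs
      simp only [Finset.mem_filter, Finset.mem_univ, true_and] at hs ⊢
      exact ⟨hs.1, hR r hr s hs.1 i j hi hj hs.2⟩
  by_contra hle
  have h := Tuple.monotone_sort key (not_lt.mp hle)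
  simp only [Function.comp_apply, Equiv.apply_symm_apply] at h
  omega

lemma not_crossing {K : ℕ} {r s : Fin K → Bool} (h : (rankSet K r ∩ rankSet K s).Nonempty)
    (i j : Fin K) (hi : r i = false) (hj : r j = true) (hsj : s j = false) : s i = false := by
  obtain ⟨π, hr, hs⟩ := h
  by_contra hsi
  exact lt_asymm (hr i j hi hj) (hs j i hsj (by simpa using hsi))

lemma rankSet_nonempty {K : ℕ} (r : Fin K → Bool) : (rankSet K r).Nonempty := by
  obtain ⟨π, hπ⟩ := exists_common_ranking {r} (by
    rintro r rfl s rfl i j hi - -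
    exact hi)
  exact ⟨π, hπ r rfl⟩

lemma exists_disjoint_rankSets {K : ℕ} (hK : 2 ≤ K) :
    ∃ r r' : Fin K → Bool, rankSet K r ∩ rankSet K r' = ∅ := by
  let a : Fin K := ⟨0, by omega⟩
  let b : Fin K := ⟨1, by omega⟩
  have hab : a ≠ b := by simp [a, b]
  refine ⟨fun i => decide (i = a), fun i => decide (i = b), ?_⟩
  rw [← Set.not_nonempty_iff_eq_empty]
  intro h
  have := not_crossing h b a (by simp [hab.symm]) (by simp) (by simp [hab])
  simp at this

/-- For `K ≥ 2`, the Helly number of `{𝒴(r) : r ∈ {0,1}^K}` equals 2.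
In particular: (i) pairwise-intersecting families of such sets have a common element, and
(ii) there are two such sets that are disjoint. -/
theorem stmt13 (K : ℕ) (hK : 2 ≤ K) :
    (HellyAt {S | ∃ r : Fin K → Bool, S = rankSet K r} 2 ∧
      ∀ q < 2, ¬ HellyAt {S | ∃ r : Fin K → Bool, S = rankSet K r} q) ∧
    (∀ (Q : ℕ) (r : Fin Q → Fin K → Bool),
      (∀ i j : Fin Q, (rankSet K (r i) ∩ rankSet K (r j)).Nonempty) →
      (⋂ i : Fin Q, rankSet K (r i)).Nonempty) ∧
    (∃ r r' : Fin K → Bool, rankSet K r ∩ rankSet K r' = ∅) := by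
  refine ⟨⟨?_, ?_⟩, ?_, exists_disjoint_rankSets hK⟩
  · intro C hC hemp
    by_contra! hcon
    obtain ⟨π, hπ⟩ := exists_common_ranking {r | rankSet K r ∈ C} (by
      intro r hr s hs
      apply not_crossing
      have h := hcon {rankSet K r, rankSet K s} (Set.pair_subset hr hs) (Set.toFinite _)
        ((Set.ncard_insert_le _ _).trans (by simp))
      rwa [Set.sInter_pair] at h)
    have hmem : π ∈ ⋂₀ C := by
      intro S hS
      obtain ⟨r, rfl⟩ := hC hS
      exact hπ r hS
    simp [hemp] at hmem
  · intro q hq hH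
    obtain ⟨r, r', hd⟩ := exists_disjoint_rankSets hK
    obtain ⟨C', hC', hfin, hcard, hemp⟩ := hH {rankSet K r, rankSet K r'}
      (Set.pair_subset ⟨r, rfl⟩ ⟨r', rfl⟩) (by rw [Set.sInter_pair, hd])
    rcases Set.Subsingleton.eq_empty_or_singleton (fun a ha b hb =>
      (Set.ncard_le_one hfin).mp (by omega) a ha b hb) with rfl | ⟨S, rfl⟩
    · simp at hemp
    · rw [Set.sInter_singleton] at hemp
      rcases hC' rfl with h | h
      · exact (rankSet_nonempty r).ne_empty (h ▸ hemp)
      · exact (rankSet_nonempty r').ne_empty ((Set.mem_singleton_iff.mp h) ▸ hemp)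
  · intro Q r h
    obtain ⟨π, hπ⟩ := exists_common_ranking (Set.range r) (by
      rintro _ ⟨i, rfl⟩ _ ⟨j, rfl⟩
      exact not_crossing (h i j))
    exact ⟨π, Set.mem_iInter.mpr fun i => hπ _ ⟨i, rfl⟩⟩
end

section
/- Fix q ∈ ℕ and K ∈ ℕ with K ≥ q+1. There exist bit strings y_1,…,y_{2^{q+1}} ∈ {0,1}^K such that ⋂_{i=1}^{2^{q+1}} B(y_i, q) = ∅, while for every j ∈ [2^{q+1}] one has ⋂_{i ≠ j} B(y_i, q) ≠ ∅. Consequently, the Helly number of the collection {B(y,q) : y ∈ {0,1}^K} is at least 2^{q+1}. -/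
/-!
The centres are all `2 ^ (q + 1)` strings supported on the first `q + 1` coordinates.
Any `z` is at distance at least `q + 1` from the centre that is complementary to `z` on those
coordinates, so no point lies in all balls (`lt_hammingDist_padFalse`). Conversely, the
complement (on the first `q + 1` coordinates) of a centre agrees somewhere on those coordinates
with every other centre, hence is within distance `q` of each of them
(`hammingDist_padFalse_le`). Such a minimal family with empty intersection consists of distinct
balls, and a subfamily with fewer balls misses one of them, so it has a common point.
-/


/-- The Hamming ball of radius `q` centered at `y ∈ {0,1}^K`. -/
def hBall (K q : ℕ) (y : Fin K → Bool) : Set (Fin K → Bool) :=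
  {z | hammingDist y z ≤ q}

/-- The extension by `false` of a string of length `q + 1` to one of length `K`. -/
def padFalse (q K : ℕ) (a : Fin (q + 1) → Bool) : Fin K → Bool :=
  fun k => if h : (k : ℕ) < q + 1 then a ⟨k, h⟩ else false

lemma hammingDist_padFalse_le {q K : ℕ} (hK : q + 1 ≤ K) (a b : Fin (q + 1) → Bool)
    (t : Fin (q + 1)) (ht : a t = b t) :
    hammingDist (padFalse q K a) (padFalse q K b) ≤ q := by
  have hsub : (Finset.univ.filter fun k => padFalse q K a k ≠ padFalse q K b k) ⊆
      (Finset.univ.erase t).image (Fin.castLE hK) := by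
    intro k hk
    replace hk : padFalse q K a k ≠ padFalse q K b k := (Finset.mem_filter.1 hk).2
    by_cases h : (k : ℕ) < q + 1
    · rw [padFalse, padFalse, dif_pos h, dif_pos h] at hk
      refine Finset.mem_image.2 ⟨⟨k, h⟩, ?_, rfl⟩
      refine Finset.mem_erase.2 ⟨?_, Finset.mem_univ _⟩
      rintro rfl
      exact hk ht
    · rw [padFalse, padFalse, dif_neg h, dif_neg h] at hk
      exact absurd rfl hk
  calc hammingDist (padFalse q K a) (padFalse q K b)
      ≤ ((Finset.univ.erase t).image (Fin.castLE hK)).card := Finset.card_le_card hsub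
    _ ≤ (Finset.univ.erase t).card := Finset.card_image_le
    _ = q := by simp

lemma lt_hammingDist_padFalse {q K : ℕ} (hK : q + 1 ≤ K) (z : Fin K → Bool) :
    q < hammingDist (padFalse q K fun t => !z (Fin.castLE hK t)) z := by
  have hsub : Finset.univ.image (Fin.castLE hK) ⊆
      Finset.univ.filter fun k => padFalse q K (fun t => !z (Fin.castLE hK t)) k ≠ z k := by
    intro k hk
    obtain ⟨t, -, rfl⟩ := Finset.mem_image.1 hk
    refine Finset.mem_filter.2 ⟨Finset.mem_univ _, ?_⟩
    have h : ((Fin.castLE hK t : Fin K) : ℕ) < q + 1 := t.isLt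
    rw [padFalse, dif_pos h]
    exact Bool.not_ne_self _
  have hcard := Finset.card_le_card hsub
  rw [Finset.card_image_of_injective _ (Fin.castLE_injective hK), Finset.card_univ,
    Fintype.card_fin] at hcard
  exact hcard

/-- A minimal family of `n` members of `𝒮` with empty intersection forces the Helly number of `𝒮`
to be at least `n`. -/
lemma not_hellyAt_of_minimal {Y : Type*} {𝒮 : Set (Set Y)} {n p : ℕ} (hp : p < n)
    (f : Fin n → Set Y) (hf : ∀ i, f i ∈ 𝒮) (hempty : (⋂ i, f i) = ∅)
    (hne : ∀ j, (⋂ i ∈ {i : Fin n | i ≠ j}, f i).Nonempty) : ¬ HellyAt 𝒮 p := by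
  intro hH
  have hinj : Function.Injective f := by
    intro i j hij
    by_contra hne_ij
    obtain ⟨x, hx⟩ := hne j
    simp only [Set.mem_iInter, Set.mem_ofPred_eq] at hx
    have hmem : x ∈ ⋂ i, f i := by
      refine Set.mem_iInter.2 fun k => ?_
      by_cases hk : k = j
      · rw [hk, ← hij]
        exact hx i hne_ij
      · exact hx k hk
    rw [hempty] at hmem
    exact hmem
  obtain ⟨C', hsub, hfin, hcard, hC'⟩ := hH (Set.range f) (Set.range_subset_iff.2 hf)
    (by rw [Set.sInter_range, hempty])
  obtain ⟨j, hj⟩ : ∃ j, f j ∉ C' := by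
    by_contra! hall
    have h := Set.ncard_le_ncard (Set.range_subset_iff.2 hall) hfin
    rw [← Set.image_univ, Set.ncard_image_of_injective _ hinj, Set.ncard_univ,
      Nat.card_fin] at h
    omega
  obtain ⟨x, hx⟩ := hne j
  simp only [Set.mem_iInter, Set.mem_ofPred_eq] at hx
  have hmem : x ∈ ⋂₀ C' := by
    intro B hB
    obtain ⟨i, rfl⟩ := hsub hB
    exact hx i fun h => hj (h ▸ hB)
  rw [hC'] at hmem
  exact hmem

/-- For `K ≥ q+1` there are `2^{q+1}` Hamming balls of radius `q` in `{0,1}^K`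
with empty total intersection such that every subfamily omitting one ball has a common
element; consequently the Helly number of the radius-`q` Hamming balls is at least
`2^{q+1}`. -/
theorem stmt16 (q K : ℕ) (hK : q + 1 ≤ K) :
    (∃ ys : Fin (2 ^ (q + 1)) → (Fin K → Bool),
      (⋂ i : Fin (2 ^ (q + 1)), hBall K q (ys i)) = ∅ ∧
      ∀ j : Fin (2 ^ (q + 1)), (⋂ i ∈ {i : Fin (2 ^ (q + 1)) | i ≠ j}, hBall K q (ys i)).Nonempty) ∧
    (∀ p : ℕ, p < 2 ^ (q + 1) → ¬ HellyAt {B | ∃ y : Fin K → Bool, B = hBall K q y} p) := by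
  have hfam : ∃ ys : Fin (2 ^ (q + 1)) → (Fin K → Bool),
      (⋂ i : Fin (2 ^ (q + 1)), hBall K q (ys i)) = ∅ ∧
      ∀ j : Fin (2 ^ (q + 1)),
        (⋂ i ∈ {i : Fin (2 ^ (q + 1)) | i ≠ j}, hBall K q (ys i)).Nonempty := by
    have e : Fin (2 ^ (q + 1)) ≃ (Fin (q + 1) → Bool) :=
      Fintype.equivOfCardEq (by simp)
    refine ⟨fun i => padFalse q K (e i), ?_, fun j => ?_⟩
    · refine Set.eq_empty_iff_forall_notMem.2 fun z hz => ?_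
      have h := Set.mem_iInter.1 hz (e.symm fun t => !z (Fin.castLE hK t))
      simp only [hBall, Set.mem_ofPred_eq, Equiv.apply_symm_apply] at h
      exact absurd h (not_le.2 (lt_hammingDist_padFalse hK z))
    · refine ⟨padFalse q K fun t => !e j t, ?_⟩
      simp only [Set.mem_iInter, Set.mem_ofPred_eq, hBall]
      intro i hij
      obtain ⟨t, ht⟩ := Function.ne_iff.1 (e.injective.ne hij)
      exact hammingDist_padFalse_le hK _ _ t (Bool.eq_not.2 ht)
  refine ⟨hfam, fun p hp => ?_⟩
  obtain ⟨ys, hempty, hne⟩ := hfam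
  exact not_hellyAt_of_minimal hp (fun i => hBall K q (ys i)) (fun i => ⟨ys i, rfl⟩) hempty hne
end

section
/- Let A_1 = {1,4,5}, A_2 = {2,5,6}, A_3 = {3,4,6} (subsets of {1,…,6}), and let S_1,…,S_T be any finite sequence with S_t ∈ {A_1, A_2, A_3} for every t ∈ [T]. Then min_{i ∈ {1,2,3}} Σ_{t=1}^T 1{i ∉ S_t} ≥ (1/2) Σ_{t=2}^T 1{S_t ≠ S_{t-1}}. -/
/-!
Each label `i ∈ {1, 2, 3}` belongs to exactly one of the three sets. Hence if `S t ≠ S (t - 1)`,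
label `i` is missing from `S t` or from `S (t - 1)`, so every switch time lies in `E ∪ (E + 1)`,
where `E` is the set of rounds at which `i` errs. Thus there are at most `2 |E|` switches
(`card_switches_div_two_le`).
-/

open scoped Classical in
/-- If label `i` determines the set containing it, then it errs at least half as often as the
sequence switches. -/
lemma card_switches_div_two_le (T : ℕ) (S : ℕ → Set ℕ) (i : ℕ)
    (h : ∀ s < T, ∀ t < T, i ∈ S s → i ∈ S t → S s = S t) :
    ((((Finset.Ico 1 T).filter fun t => S t ≠ S (t - 1)).card : ℝ)) / 2 ≤
      (((Finset.range T).filter fun t => i ∉ S t).card : ℝ) := by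
  set E := (Finset.range T).filter fun t => i ∉ S t with hE
  have hsub : ((Finset.Ico 1 T).filter fun t => S t ≠ S (t - 1)) ⊆ E ∪ E.image (· + 1) := by
    intro t ht
    obtain ⟨⟨h1, hT⟩, hne⟩ : (1 ≤ t ∧ t < T) ∧ S t ≠ S (t - 1) := by simpa using ht
    by_cases hi : i ∈ S t
    · have hi' : i ∉ S (t - 1) := fun hi' => hne (h t hT (t - 1) (by omega) hi hi')
      refine Finset.mem_union_right _ (Finset.mem_image.2 ⟨t - 1, ?_, by omega⟩)
      exact Finset.mem_filter.2 ⟨Finset.mem_range.2 (by omega), hi'⟩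
    · exact Finset.mem_union_left _ (Finset.mem_filter.2 ⟨Finset.mem_range.2 hT, hi⟩)
  have hcard := (Finset.card_le_card hsub).trans (Finset.card_union_le _ _)
  have himg : (E.image (· + 1)).card ≤ E.card := Finset.card_image_le
  have hle : ((Finset.Ico 1 T).filter fun t => S t ≠ S (t - 1)).card ≤ 2 * E.card := by omega
  have hle' : (((Finset.Ico 1 T).filter fun t => S t ≠ S (t - 1)).card : ℝ) ≤ 2 * E.card := by
    exact_mod_cast hle
  linarith


open scoped Classical in
/-- For `A₁ = {1,4,5}`, `A₂ = {2,5,6}`, `A₃ = {3,4,6}` and any sequence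
`S_1,…,S_T` of sets from `{A₁,A₂,A₃}` (indexed here by `t = 0,…,T-1`), the best fixed label
among `{1,2,3}` errs at least half as often as the sequence switches:
`min_i Σ_t 1{i ∉ S_t} ≥ (1/2) Σ_{t≥1} 1{S_t ≠ S_{t-1}}`. -/
theorem stmt19 (T : ℕ) (S : ℕ → Set ℕ)
    (hS : ∀ t < T, S t ∈ ({({1, 4, 5} : Set ℕ), {2, 5, 6}, {3, 4, 6}} : Set (Set ℕ))) :
    ((((Finset.Ico 1 T).filter fun t => S t ≠ S (t - 1)).card : ℝ)) / 2 ≤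
      min (min ((((Finset.range T).filter fun t => (1 : ℕ) ∉ S t).card : ℝ))
            ((((Finset.range T).filter fun t => (2 : ℕ) ∉ S t).card : ℝ)))
        ((((Finset.range T).filter fun t => (3 : ℕ) ∉ S t).card : ℝ)) := by
  refine le_min (le_min ?_ ?_) ?_ <;>
  · refine card_switches_div_two_le T S _ fun s hs t ht his hit => ?_
    -- equal values are immediate; if the values differ, the label is missing from one of them
    rcases hS s hs with h | h | h <;> rcases hS t ht with h' | h' | h' <;>
      rw [h] at his <;> rw [h'] at hit <;> first | exact h.trans h'.symm | simp at his hit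
end
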